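/- arXiv:1203.0042 — 2 statements merged into one kernel-verified Lean document; each statement's English description precedes it below -/
import Mathlib

section
/- Let μ ∈ ℂ∖{0}, η ∈ ℂ and k ≥ 1 an integer. Then the complex vector space V_k(μ) has dimension 4k, and every g ∈ V_k(μ) can be written as g(z) = c·∏_{i=1}^{4k} θ(z+a_i−ν) / P_k(η,z) for some c ∈ ℂ and a ∈ ℂ^{4k} with a₁+⋯+a_{4k} = 2k(k−1)η, where ν is the unique complex number with exp(8iπν) = μ and Re ν ∈ [0,1/4). -/
open Complex Filter

noncomputable section

/-- The Jacobi theta function `θ₁(z|τ)`. -/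
def θ (τ z : ℂ) : ℂ :=
  I * ∑' n : ℤ, (-1 : ℂ) ^ n * Complex.exp (Real.pi * I * τ * ((n : ℂ) - 1/2) ^ 2) *
    Complex.exp (Real.pi * I * (2 * (n : ℂ) - 1) * z)

/-- `P_k(η,z) = ∏_{ℓ=0}^{k-1} θ(2z+2ℓη)`. -/
def Pk (τ η : ℂ) (k : ℕ) (z : ℂ) : ℂ :=
  ∏ ℓ ∈ Finset.range k, θ τ (2 * z + 2 * (ℓ : ℂ) * η)

/-- Membership in the space `V_k(μ)`: meromorphic on `ℂ`, with `g(z+1)=g(z)`,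
`g(z+τ)=μ^k g(z)`, and such that `g·P_k(η,·)` extends to an entire function. -/
def memVk (τ μ η : ℂ) (k : ℕ) (g : ℂ → ℂ) : Prop :=
  MeromorphicOn g Set.univ ∧ (∀ z, g (z + 1) = g z) ∧ (∀ z, g (z + τ) = μ ^ k * g z) ∧
  ∃ h : ℂ → ℂ, Differentiable ℂ h ∧ ∀ z, Pk τ η k z ≠ 0 → g z * Pk τ η k z = h z

/-!
If `exp (8πiν) = μ`, then `g ↦ g P_k` identifies `V_k(μ)` with the space of all theta functions of
degree `4k` and characteristic `2k(k - 1)η - 4kν`, because `P_k` is itself a theta function, of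
degree `4k` and characteristic `2k(k - 1)η`. For `N ≥ 1`, the theta functions of degree `N` and
characteristic `s` form a space of dimension `N`, and they are the multiples of the products of `N`
translates `θ (z + aᵢ)` with `∑ aᵢ = s`: both facts follow by induction on `N` from division by
`θ (z + a)`. Such a division is possible as soon as the dividend vanishes at `-a`, since by the
Jacobi triple product the zeros of `θ` are simple and are exactly the points of `Λ`. In degree `0`
Liouville's theorem applies.
-/

section EntireFunctions

lemma dense_ne_zero_of_differentiable {p : ℂ → ℂ} (hp : Differentiable ℂ p) (hp0 : p ≠ 0) :
    Dense {z | p z ≠ 0} := fun _ => mem_closure_iff_frequently.mpr fun h =>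
  hp0 <| AnalyticOnNhd.eq_of_eventuallyEq (fun z _ => hp.analyticAt z)
    (fun _ _ => analyticAt_const) (h.mono fun _ hw => not_not.mp hw)

lemma eq_of_eq_off_zeros {E : Type*} [TopologicalSpace E] [T2Space E] {p : ℂ → ℂ} {u v : ℂ → E}
    (hp : Differentiable ℂ p) (hp0 : p ≠ 0) (hu : Continuous u) (hv : Continuous v)
    (h : ∀ z, p z ≠ 0 → u z = v z) : u = v :=
  hu.ext_on (dense_ne_zero_of_differentiable hp hp0) hv h

lemma mul_ne_zero_of_differentiable {f g : ℂ → ℂ} (hf : Differentiable ℂ f) (hg : Continuous g)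
    (hf0 : f ≠ 0) (hg0 : g ≠ 0) : f * g ≠ 0 := fun h =>
  hg0 <| eq_of_eq_off_zeros hf hf0 hg continuous_const fun z hz =>
    (mul_eq_zero.mp (congrFun h z)).resolve_left hz

lemma prod_ne_zero_of_differentiable {ι : Type*} (u : Finset ι) {f : ι → ℂ → ℂ}
    (hf : ∀ i ∈ u, Differentiable ℂ (f i)) (hf0 : ∀ i ∈ u, f i ≠ 0) : ∏ i ∈ u, f i ≠ 0 := by
  classical
  induction u using Finset.induction_on with
  | empty => simp
  | insert i u hi ih =>
    rw [Finset.forall_mem_insert] at hf hf0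
    rw [Finset.prod_insert hi]
    exact mul_ne_zero_of_differentiable hf.1 (Differentiable.finsetProd hf.2).continuous hf0.1
      (ih hf.2 hf0.2)

lemma linearIndependent_div {ι : Type*} {p : ℂ → ℂ} (hp : Differentiable ℂ p) (hp0 : p ≠ 0)
    {b : ι → ℂ → ℂ} (hb : ∀ i, Differentiable ℂ (b i)) (h : LinearIndependent ℂ b) :
    LinearIndependent ℂ fun i => b i / p := by
  rw [linearIndependent_iff'] at h ⊢
  intro u c hsum
  have hd : Differentiable ℂ (∑ i ∈ u, c i • b i) :=
    Differentiable.sum fun i _ => (hb i).const_smul (c i)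
  refine h u c (eq_of_eq_off_zeros hp hp0 hd.continuous continuous_const fun z hz => ?_)
  have hz' := congrFun hsum z
  simp only [Finset.sum_apply, Pi.smul_apply, Pi.div_apply, smul_eq_mul, Pi.zero_apply,
    ← mul_div_assoc, ← Finset.sum_div] at hz'
  simpa using (div_eq_zero_iff.mp hz').resolve_right hz

lemma meromorphicOrderAt_div_nonneg {𝕜 : Type*} [NontriviallyNormedField 𝕜] {f p : 𝕜 → 𝕜} {z : 𝕜}
    (hf : AnalyticAt 𝕜 f z) (hp : AnalyticAt 𝕜 p z) (hp_top : analyticOrderAt p z ≠ ⊤)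
    (h : analyticOrderAt p z ≤ analyticOrderAt f z) : 0 ≤ meromorphicOrderAt (f / p) z := by
  rw [meromorphicOrderAt_div hf.meromorphicAt hp.meromorphicAt, hf.meromorphicOrderAt_eq,
    hp.meromorphicOrderAt_eq]
  lift analyticOrderAt p z to ℕ using hp_top with m
  cases hn : analyticOrderAt f z with
  | top => simp
  | coe n =>
    rw [hn, Nat.cast_le] at h
    exact WithTop.coe_le_coe.mpr (sub_nonneg.mpr (Int.ofNat_le.mpr h))

lemma exists_differentiable_eq_mul {f p : ℂ → ℂ} (hf : Differentiable ℂ f)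
    (hp : Differentiable ℂ p) (hp0 : p ≠ 0)
    (hord : ∀ z, analyticOrderAt p z ≤ analyticOrderAt f z) :
    ∃ g, Differentiable ℂ g ∧ f = p * g := by
  have hq : MeromorphicOn (f / p) Set.univ := fun z _ =>
    (hf.analyticAt z).meromorphicAt.div (hp.analyticAt z).meromorphicAt
  set g := toMeromorphicNFOn (f / p) Set.univ with g_def
  have hg : Differentiable ℂ g := fun z => by
    have hnf := meromorphicNFOn_toMeromorphicNFOn (f / p) Set.univ (Set.mem_univ z)
    have hp_top : analyticOrderAt p z ≠ ⊤ := fun h =>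
      hp0 ((AnalyticOnNhd.analyticOrderAt_eq_top_iff_eq_zero z hp.analyticAt).mp h)
    refine (hnf.meromorphicOrderAt_nonneg_iff_analyticAt.mp ?_).differentiableAt
    rw [meromorphicOrderAt_toMeromorphicNFOn hq (Set.mem_univ z)]
    exact meromorphicOrderAt_div_nonneg (hf.analyticAt z) (hp.analyticAt z) hp_top (hord z)
  refine ⟨g, hg, eq_of_eq_off_zeros hp hp0 hf.continuous
    (hp.continuous.mul hg.continuous) fun z hz => ?_⟩
  have hgz : g z = (f / p) z := by
    rw [g_def, toMeromorphicNFOn_eq_toMeromorphicNFAt hq (Set.mem_univ z),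
      toMeromorphicNFAt_eq_self.mpr ((hf.analyticAt z).div (hp.analyticAt z) hz).meromorphicNFAt]
  rw [Pi.mul_apply, hgz, Pi.div_apply, mul_div_cancel₀ _ hz]

lemma analyticOrderAt_le_of_le_one {𝕜 E F : Type*} [NontriviallyNormedField 𝕜]
    [NormedAddCommGroup E] [NormedSpace 𝕜 E] [NormedAddCommGroup F] [NormedSpace 𝕜 F]
    {f : 𝕜 → E} {p : 𝕜 → F} {z : 𝕜} (hf : AnalyticAt 𝕜 f z) (hp : analyticOrderAt p z ≤ 1)
    (h : p z = 0 → f z = 0) : analyticOrderAt p z ≤ analyticOrderAt f z := by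
  rcases eq_or_ne (analyticOrderAt p z) 0 with h0 | h0
  · simp [h0]
  · exact hp.trans <| Order.one_le_iff_ne_zero.mpr <|
      hf.analyticOrderAt_ne_zero.mpr (h (apply_eq_zero_of_analyticOrderAt_ne_zero h0))

end EntireFunctions

section Lattice

/-- The period lattice `Λ = ℤ + τℤ`. -/
def periodLattice (τ : ℂ) : AddSubgroup ℂ :=
  AddSubgroup.closure {1, τ}

lemma mem_periodLattice {τ z : ℂ} : z ∈ periodLattice τ ↔ ∃ m n : ℤ, m + n * τ = z := by
  simp [periodLattice, AddSubgroup.mem_closure_pair]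

lemma periodic_of_mem_periodLattice {α : Type*} {τ ω : ℂ} {f : ℂ → α}
    (h1 : Function.Periodic f 1) (hτ : Function.Periodic f τ) (hω : ω ∈ periodLattice τ) :
    Function.Periodic f ω := by
  obtain ⟨m, n, rfl⟩ := mem_periodLattice.mp hω
  simpa using (h1.int_mul m).add_period (hτ.int_mul n)

lemma exists_sub_mem_periodLattice {τ : ℂ} (hτ : 0 < τ.im) (z : ℂ) :
    ∃ x ∈ Set.Icc (0 : ℝ) 1, ∃ y ∈ Set.Icc (0 : ℝ) 1, z - (x + y * τ) ∈ periodLattice τ := by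
  set y : ℝ := z.im / τ.im
  set x : ℝ := z.re - y * τ.re
  have hz : z = x + y * τ := by
    apply Complex.ext
    · simp [x]
    · simp [y, hτ.ne']
  refine ⟨Int.fract x, ⟨Int.fract_nonneg x, (Int.fract_lt_one x).le⟩,
    Int.fract y, ⟨Int.fract_nonneg y, (Int.fract_lt_one y).le⟩,
    mem_periodLattice.mpr ⟨⌊x⌋, ⌊y⌋, ?_⟩⟩
  simp only [hz, Int.fract]
  push_cast
  ring

lemma exists_eq_const_of_norm_periodic {τ : ℂ} (hτ : 0 < τ.im) {f : ℂ → ℂ}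
    (hf : Differentiable ℂ f) (h1 : Function.Periodic (fun z => ‖f z‖) 1)
    (h2 : Function.Periodic (fun z => ‖f z‖) τ) : ∃ c, ∀ z, f z = c := by
  have hcompact : IsCompact ((fun p : ℝ × ℝ => ‖f (p.1 + p.2 * τ)‖) ''
      (Set.Icc 0 1 ×ˢ Set.Icc 0 1)) := by
    have := hf.continuous
    exact (isCompact_Icc.prod isCompact_Icc).image (by fun_prop)
  obtain ⟨C, hC⟩ := hcompact.bddAbove
  refine hf.exists_const_forall_eq_of_bounded (isBounded_iff_forall_norm_le.mpr ⟨C, ?_⟩)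
  rintro _ ⟨z, rfl⟩
  obtain ⟨x, hx, y, hy, hω⟩ := exists_sub_mem_periodLattice hτ z
  have hfz : ‖f (x + y * τ + (z - (x + y * τ)))‖ = ‖f (x + y * τ)‖ :=
    periodic_of_mem_periodLattice h1 h2 hω _
  rw [add_sub_cancel] at hfz
  exact hfz.le.trans (hC ⟨(x, y), ⟨hx, hy⟩, rfl⟩)

end Lattice

section QuasiPeriodic

lemma neg_one_zpow_ne_zero {F : Type*} [DivisionRing F] (N : ℤ) : (-1 : F) ^ N ≠ 0 :=
  zpow_ne_zero N (neg_ne_zero.mpr one_ne_zero)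

lemma neg_one_zpow_four_mul {F : Type*} [DivisionRing F] (N : ℤ) :
    (-1 : F) ^ (4 * N) = (-1) ^ N * (-1) ^ N := by
  rw [← zpow_add₀ (neg_ne_zero.mpr one_ne_zero), (show Even (4 * N) by grind).neg_one_zpow,
    (Even.add_self N).neg_one_zpow]

/-- Quasi-periodicity of degree `N` and characteristic `s`, normalised so that the product
`∏ θ (z + aᵢ)` of `N` translates of `θ` has degree `N` and characteristic `∑ aᵢ`. The degree is an
integer so that quotients can be formed. -/
structure IsQuasiPeriodic (τ : ℂ) (N : ℤ) (s : ℂ) (f : ℂ → ℂ) : Prop where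
  add_one : ∀ z, f (z + 1) = (-1) ^ N * f z
  add_tau : ∀ z, f (z + τ) = (-1) ^ N * exp (-(Real.pi * I * (N * (2 * z + τ) + 2 * s))) * f z

namespace IsQuasiPeriodic

variable {τ s t : ℂ} {N M : ℤ} {f g : ℂ → ℂ}

lemma one (τ : ℂ) : IsQuasiPeriodic τ 0 0 1 where
  add_one z := by simp
  add_tau z := by simp

lemma mul (hf : IsQuasiPeriodic τ N s f) (hg : IsQuasiPeriodic τ M t g) :
    IsQuasiPeriodic τ (N + M) (s + t) (f * g) where
  add_one z := by
    rw [Pi.mul_apply, Pi.mul_apply, hf.add_one, hg.add_one, zpow_add₀ (by simp)]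
    ring
  add_tau z := by
    have hexp : -(Real.pi * I * ((N + M : ℤ) * (2 * z + τ) + 2 * (s + t))) =
        -(Real.pi * I * (N * (2 * z + τ) + 2 * s)) +
          -(Real.pi * I * (M * (2 * z + τ) + 2 * t)) := by
      push_cast
      ring
    rw [Pi.mul_apply, Pi.mul_apply, hf.add_tau, hg.add_tau, zpow_add₀ (by simp), hexp, exp_add]
    ring

lemma prod {ι : Type*} (u : Finset ι) {N : ι → ℤ} {s : ι → ℂ} {f : ι → ℂ → ℂ}
    (hf : ∀ i ∈ u, IsQuasiPeriodic τ (N i) (s i) (f i)) :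
    IsQuasiPeriodic τ (∑ i ∈ u, N i) (∑ i ∈ u, s i) (∏ i ∈ u, f i) := by
  classical
  induction u using Finset.induction_on with
  | empty => simpa using one τ
  | insert i u hi ih =>
    rw [Finset.forall_mem_insert] at hf
    rw [Finset.sum_insert hi, Finset.sum_insert hi, Finset.prod_insert hi]
    exact hf.1.mul (ih hf.2)

lemma inv (hf : IsQuasiPeriodic τ N s f) : IsQuasiPeriodic τ (-N) (-s) f⁻¹ where
  add_one z := by rw [Pi.inv_apply, Pi.inv_apply, hf.add_one, mul_inv, zpow_neg]
  add_tau z := by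
    have hexp : -(Real.pi * I * ((-N : ℤ) * (2 * z + τ) + 2 * -s)) =
        -(-(Real.pi * I * (N * (2 * z + τ) + 2 * s))) := by
      push_cast
      ring
    rw [Pi.inv_apply, Pi.inv_apply, hf.add_tau, mul_inv, mul_inv, hexp, exp_neg (-_), zpow_neg]

lemma div (hf : IsQuasiPeriodic τ N s f) (hg : IsQuasiPeriodic τ M t g) :
    IsQuasiPeriodic τ (N - M) (s - t) (f / g) := by
  simpa only [div_eq_mul_inv, sub_eq_add_neg] using hf.mul hg.inv

lemma comp_add_const (hf : IsQuasiPeriodic τ N s f) (a : ℂ) :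
    IsQuasiPeriodic τ N (s + N * a) fun z => f (z + a) where
  add_one z := by rw [add_right_comm, hf.add_one]
  add_tau z := by
    rw [add_right_comm, hf.add_tau]
    ring_nf

lemma comp_two_mul (hf : IsQuasiPeriodic τ N s f) :
    IsQuasiPeriodic τ (4 * N) (2 * s) fun z => f (2 * z) where
  add_one z := by
    rw [neg_one_zpow_four_mul, mul_add, show (2 : ℂ) * 1 = 1 + 1 by norm_num, ← add_assoc,
      hf.add_one, hf.add_one, mul_assoc]
  add_tau z := by
    have hexp : -(Real.pi * I * ((4 * N : ℤ) * (2 * z + τ) + 2 * (2 * s))) =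
        -(Real.pi * I * (N * (2 * (2 * z + τ) + τ) + 2 * s)) +
          -(Real.pi * I * (N * (2 * (2 * z) + τ) + 2 * s)) := by
      push_cast
      ring
    rw [neg_one_zpow_four_mul, hexp, exp_add, mul_add, two_mul τ, ← add_assoc, hf.add_tau,
      hf.add_tau]
    ring

/-- The identity is checked where both sides are off the zeros of `p`; as `p` is quasi-periodic,
its zero set is stable under the translations by `1` and `τ`. -/
lemma of_eq_off_zeros {p u v : ℂ → ℂ} (hu : IsQuasiPeriodic τ N s u)
    (hp : IsQuasiPeriodic τ M t p) (hpd : Differentiable ℂ p) (hp0 : p ≠ 0) (hv : Continuous v)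
    (h : ∀ z, p z ≠ 0 → u z = v z) : IsQuasiPeriodic τ N s v where
  add_one := congrFun <| eq_of_eq_off_zeros hpd hp0 (by fun_prop) (by fun_prop) fun z hz => by
    rw [← h z hz, ← h (z + 1) (by simp [hp.add_one, hz, neg_one_zpow_ne_zero]), hu.add_one]
  add_tau := congrFun <| eq_of_eq_off_zeros hpd hp0 (by fun_prop) (by fun_prop) fun z hz => by
    rw [← h z hz, ← h (z + τ) (by simp [hp.add_tau, hz, neg_one_zpow_ne_zero]), hu.add_tau]

lemma analyticOrderAt_add (hf : IsQuasiPeriodic τ N s f) (hfd : Differentiable ℂ f) {ω : ℂ}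
    (hω : ω ∈ periodLattice τ) (z : ℂ) :
    analyticOrderAt f (z + ω) = analyticOrderAt f z := by
  have hperiod {a : ℂ} {e : ℂ → ℂ} (he : Differentiable ℂ e) (he0 : ∀ z, e z ≠ 0)
      (h : ∀ z, f (z + a) = e z * f z) : Function.Periodic (analyticOrderAt f) a := fun z => by
    have htranslate : analyticOrderAt (f ∘ (· + a)) z = analyticOrderAt f (z + a) :=
      analyticOrderAt_comp_of_deriv_ne_zero (by fun_prop) (by simp)
    have hfe : f ∘ (· + a) = e * f := funext h
    rw [← htranslate, hfe, analyticOrderAt_mul (he.analyticAt z) (hfd.analyticAt z),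
      (he.analyticAt z).analyticOrderAt_eq_zero.mpr (he0 z), zero_add]
  exact periodic_of_mem_periodLattice
    (hperiod (by fun_prop) (by simp [neg_one_zpow_ne_zero]) hf.add_one)
    (hperiod (by fun_prop) (by simp [neg_one_zpow_ne_zero]) hf.add_tau) hω z

lemma apply_add_eq_zero_iff (hf : IsQuasiPeriodic τ N s f) {ω : ℂ}
    (hω : ω ∈ periodLattice τ) (z : ℂ) : f (z + ω) = 0 ↔ f z = 0 :=
  iff_of_eq <| periodic_of_mem_periodLattice (f := fun z => f z = 0)
    (fun z => by simp [hf.add_one, neg_one_zpow_ne_zero])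
    (fun z => by simp [hf.add_tau, neg_one_zpow_ne_zero]) hω z

/-- After multiplication by a suitable `exp (ibz)`, with `b` real, the multipliers of a function
of degree `0` have modulus `1`. -/
lemma exists_eq_const_mul_exp (hτ : 0 < τ.im) (hf : IsQuasiPeriodic τ 0 s f)
    (hfd : Differentiable ℂ f) : ∃ b c : ℂ, ∀ z, f z = c * exp (b * z) := by
  set b : ℝ := 2 * Real.pi * s.im / τ.im with hb
  obtain ⟨c, hc⟩ := exists_eq_const_of_norm_periodic hτ (f := fun z => f z * exp (b * I * z))
    (by fun_prop) (fun z => by simp [hf.add_one, Complex.norm_exp]) (fun z => by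
      beta_reduce
      rw [hf.add_tau, zpow_zero, one_mul, mul_comm (exp _), mul_assoc, ← exp_add, norm_mul,
        norm_mul, Complex.norm_exp, Complex.norm_exp]
      congr 2
      simp [hb]
      field_simp
      ring)
  refine ⟨-(b * I), c, fun z => ?_⟩
  rw [← hc z, mul_assoc, ← exp_add]
  simp

lemma characteristic_mem_periodLattice (hτ : 0 < τ.im) (hf : IsQuasiPeriodic τ 0 s f)
    (hfd : Differentiable ℂ f) (hf0 : f ≠ 0) : s ∈ periodLattice τ := by
  obtain ⟨b, c, hfz⟩ := hf.exists_eq_const_mul_exp hτ hfd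
  have hc : c ≠ 0 := fun hc => hf0 (funext fun z => by simp [hfz, hc])
  have h1 : exp b = 1 := by simpa [hfz, hc] using hf.add_one 0
  have h2 : exp (b * τ) = exp (-(2 * Real.pi * I * s)) := by
    have := hf.add_tau 0
    simp only [hfz, zero_add, mul_zero, exp_zero, zpow_zero, one_mul, mul_one, Int.cast_zero,
      zero_mul] at this
    rw [mul_comm] at this
    rw [mul_right_cancel₀ hc this]
    ring_nf
  obtain ⟨n, rfl⟩ := exp_eq_one_iff.mp h1
  obtain ⟨m, hm⟩ := exp_eq_exp_iff_exists_int.mp h2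
  refine mem_periodLattice.mpr ⟨m, -n, mul_left_cancel₀ two_pi_I_ne_zero ?_⟩
  push_cast
  linear_combination -hm

end IsQuasiPeriodic

end QuasiPeriodic

section ThetaSpace

/-- The space of theta functions of degree `N` and characteristic `s`, i.e. of the sections of a
line bundle of degree `N` on `ℂ/Λ`. -/
def thetaSpace (τ : ℂ) (N : ℤ) (s : ℂ) : Submodule ℂ (ℂ → ℂ) where
  carrier := {f | Differentiable ℂ f ∧ IsQuasiPeriodic τ N s f}
  zero_mem' := ⟨differentiable_const 0, fun z => by simp, fun z => by simp⟩
  add_mem' hf hg := ⟨hf.1.add hg.1,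
    fun z => by simp only [Pi.add_apply, hf.2.add_one, hg.2.add_one, mul_add],
    fun z => by simp only [Pi.add_apply, hf.2.add_tau, hg.2.add_tau, mul_add]⟩
  smul_mem' c f hf := ⟨hf.1.const_smul c,
    fun z => by simp only [Pi.smul_apply, hf.2.add_one, mul_smul_comm],
    fun z => by simp only [Pi.smul_apply, hf.2.add_tau, mul_smul_comm]⟩

variable {τ s t : ℂ} {N M : ℤ} {f g : ℂ → ℂ}

lemma mul_mem_thetaSpace (hf : f ∈ thetaSpace τ N s) (hg : g ∈ thetaSpace τ M t) :
    f * g ∈ thetaSpace τ (N + M) (s + t) :=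
  ⟨hf.1.mul hg.1, hf.2.mul hg.2⟩

lemma prod_mem_thetaSpace {ι : Type*} (u : Finset ι) {N : ι → ℤ} {s : ι → ℂ} {f : ι → ℂ → ℂ}
    (hf : ∀ i ∈ u, f i ∈ thetaSpace τ (N i) (s i)) :
    ∏ i ∈ u, f i ∈ thetaSpace τ (∑ i ∈ u, N i) (∑ i ∈ u, s i) :=
  ⟨.finsetProd fun i hi => (hf i hi).1, .prod u fun i hi => (hf i hi).2⟩

lemma exists_mem_thetaSpace_eq_mul (hf : f ∈ thetaSpace τ N s) (hg : g ∈ thetaSpace τ M t)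
    (hg0 : g ≠ 0) (hord : ∀ z, analyticOrderAt g z ≤ analyticOrderAt f z) :
    ∃ h ∈ thetaSpace τ (N - M) (s - t), f = g * h := by
  obtain ⟨h, hh, rfl⟩ := exists_differentiable_eq_mul hf.1 hg.1 hg0 hord
  refine ⟨h, ⟨hh, (hf.2.div hg.2).of_eq_off_zeros hg.2 hg.1 hg0 hh.continuous fun z hz => ?_⟩, rfl⟩
  rw [Pi.div_apply, Pi.mul_apply, mul_div_cancel_left₀ _ hz]

lemma exists_eq_const_of_mem_thetaSpace (hτ : 0 < τ.im) (hf : f ∈ thetaSpace τ 0 0) :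
    ∃ c, ∀ z, f z = c :=
  exists_eq_const_of_norm_periodic hτ hf.1 (fun z => by simp [hf.2.add_one])
    fun z => by simp [hf.2.add_tau]

lemma exists_eq_smul_of_analyticOrderAt_le (hτ : 0 < τ.im) (hf : f ∈ thetaSpace τ N s)
    (hg : g ∈ thetaSpace τ N s) (hg0 : g ≠ 0)
    (hord : ∀ z, analyticOrderAt g z ≤ analyticOrderAt f z) : ∃ c : ℂ, f = c • g := by
  obtain ⟨h, hh, rfl⟩ := exists_mem_thetaSpace_eq_mul hf hg hg0 hord
  rw [sub_self, sub_self] at hh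
  obtain ⟨c, hc⟩ := exists_eq_const_of_mem_thetaSpace hτ hh
  exact ⟨c, funext fun z => by simp [hc, mul_comm]⟩

lemma thetaSpace_zero_eq_bot (hτ : 0 < τ.im) (hs : s ∉ periodLattice τ) :
    thetaSpace τ 0 s = ⊥ :=
  (Submodule.eq_bot_iff _).mpr fun _ hf => by_contra fun hf0 =>
    hs (hf.2.characteristic_mem_periodLattice hτ hf.1 hf0)

end ThetaSpace

section EulerProduct

/-- The Euler product `∏_{n ≥ 0} (1 - exp (2πi (z + nτ)))`, which accounts for the zeros of `θ`
on one side of the real axis. -/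
def halfProd (τ z : ℂ) : ℂ :=
  ∏' n : ℕ, (1 + -exp (2 * Real.pi * I * (z + n * τ)))

variable {τ : ℂ}

lemma norm_halfProd_term (τ z : ℂ) (n : ℕ) :
    ‖-exp (2 * Real.pi * I * (z + n * τ))‖ =
      Real.exp (-2 * Real.pi * z.im) * Real.exp (-2 * Real.pi * τ.im) ^ n := by
  rw [norm_neg, Complex.norm_exp, ← Real.exp_nat_mul, ← Real.exp_add]
  congr 1
  simp
  ring

lemma summable_halfProd_bound (hτ : 0 < τ.im) (C : ℝ) :
    Summable fun n : ℕ => C * Real.exp (-2 * Real.pi * τ.im) ^ n := by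
  refine (summable_geometric_of_lt_one (Real.exp_pos _).le ?_).mul_left _
  rw [Real.exp_lt_one_iff]
  linarith [mul_pos Real.pi_pos hτ]

lemma summable_norm_halfProd_term (hτ : 0 < τ.im) (z : ℂ) :
    Summable fun n : ℕ => ‖-exp (2 * Real.pi * I * (z + n * τ))‖ := by
  simpa only [norm_halfProd_term] using summable_halfProd_bound hτ _

lemma differentiable_halfProd (hτ : 0 < τ.im) : Differentiable ℂ (halfProd τ) := by
  intro z
  have hU : IsOpen {w : ℂ | z.im - 1 < w.im} := isOpen_lt continuous_const continuous_im
  have hbound (n : ℕ) (w : ℂ) (hw : z.im - 1 < w.im) :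
      ‖-exp (2 * Real.pi * I * (w + n * τ))‖ ≤
        Real.exp (-2 * Real.pi * (z.im - 1)) * Real.exp (-2 * Real.pi * τ.im) ^ n := by
    rw [norm_halfProd_term]
    refine mul_le_mul_of_nonneg_right (Real.exp_le_exp.mpr ?_) (by positivity)
    linarith [mul_le_mul_of_nonneg_left hw.le Real.pi_pos.le]
  have hprod := (summable_halfProd_bound hτ
    (Real.exp (-2 * Real.pi * (z.im - 1)))).hasProdLocallyUniformlyOn_nat_one_add
    (f := fun (n : ℕ) w => -exp (2 * Real.pi * I * (w + n * τ))) hU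
    (.of_forall hbound) (fun n => by fun_prop)
  refine (TendstoLocallyUniformlyOn.differentiableOn hprod (.of_forall fun u => ?_) hU
    ).differentiableAt (hU.mem_nhds (by simp))
  exact (Differentiable.fun_finsetProd fun n _ => by fun_prop).differentiableOn

lemma halfProd_eq_mul (hτ : 0 < τ.im) (z : ℂ) :
    halfProd τ z = (1 - exp (2 * Real.pi * I * z)) * halfProd τ (z + τ) := by
  have hshift (n : ℕ) : z + ((n + 1 : ℕ) : ℂ) * τ = z + τ + n * τ := by push_cast; ring
  rw [halfProd, tprod_eq_zero_mul']
  · simp only [hshift, halfProd, Nat.cast_zero, zero_mul, add_zero, ← sub_eq_add_neg]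
  · simpa only [hshift] using
      multipliable_one_add_of_summable (summable_norm_halfProd_term hτ (z + τ))

lemma halfProd_add_one (τ z : ℂ) : halfProd τ (z + 1) = halfProd τ z := by
  refine tprod_congr fun n => ?_
  rw [show 2 * Real.pi * I * (z + 1 + n * τ) =
    2 * Real.pi * I * (z + n * τ) + 2 * Real.pi * I by ring, exp_periodic]

lemma exists_of_halfProd_eq_zero (hτ : 0 < τ.im) {z : ℂ} (h : halfProd τ z = 0) :
    ∃ (n : ℕ) (m : ℤ), z + n * τ = m := by
  by_contra! hne
  refine tprod_one_add_ne_zero_of_summable (fun n h0 => ?_) (summable_norm_halfProd_term hτ z) h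
  rw [← sub_eq_add_neg, sub_eq_zero, eq_comm, exp_eq_one_iff] at h0
  obtain ⟨m, hm⟩ := h0
  exact hne n m (mul_left_cancel₀ two_pi_I_ne_zero (hm.trans (mul_comm _ _)))

lemma halfProd_tau_ne_zero (hτ : 0 < τ.im) : halfProd τ τ ≠ 0 := by
  intro h
  obtain ⟨n, m, hn⟩ := exists_of_halfProd_eq_zero hτ h
  have him : τ.im + n * τ.im = 0 := by simpa using congrArg im hn
  have : 0 ≤ (n : ℝ) * τ.im := by positivity
  linarith

/-- The right-hand side of the Jacobi triple product, up to a constant factor. -/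
def thetaProd (τ z : ℂ) : ℂ :=
  exp (-(Real.pi * I * z)) * halfProd τ z * halfProd τ (τ - z)

lemma thetaProd_eq_mul (hτ : 0 < τ.im) (z : ℂ) :
    thetaProd τ z = (1 - exp (2 * Real.pi * I * z)) *
      (exp (-(Real.pi * I * z)) * halfProd τ (z + τ) * halfProd τ (τ - z)) := by
  rw [thetaProd, halfProd_eq_mul hτ z]
  ring

lemma thetaProd_mem_thetaSpace (hτ : 0 < τ.im) : thetaProd τ ∈ thetaSpace τ 1 0 := by
  refine ⟨?_, fun z => ?_, fun z => ?_⟩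
  · have := differentiable_halfProd hτ
    unfold thetaProd
    fun_prop
  · have hexp : -(Real.pi * I * (z + 1)) = -(Real.pi * I * z) - Real.pi * I := by ring
    rw [thetaProd, thetaProd, halfProd_add_one, ← halfProd_add_one τ (τ - (z + 1)), hexp,
      exp_sub_pi_mul_I, sub_add, add_sub_cancel_right]
    ring
  · have hexp : -(Real.pi * I * (z + τ)) =
        2 * Real.pi * I * z + -(Real.pi * I * z) + -(Real.pi * I * (2 * z + τ)) := by ring
    have hneg : (1 - exp (2 * Real.pi * I * -z)) * exp (2 * Real.pi * I * z) =
        -(1 - exp (2 * Real.pi * I * z)) := by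
      rw [sub_mul, ← exp_add]
      simp
    rw [thetaProd_eq_mul hτ z, thetaProd, show τ - (z + τ) = -z by ring,
      halfProd_eq_mul hτ (-z), show -z + τ = τ - z by ring, hexp, exp_add, exp_add]
    simp only [Int.cast_one, one_mul, mul_zero, add_zero, zpow_one]
    linear_combination exp (-(Real.pi * I * z)) * exp (-(Real.pi * I * (2 * z + τ))) *
      halfProd τ (z + τ) * halfProd τ (τ - z) * hneg

lemma mem_periodLattice_of_thetaProd_eq_zero (hτ : 0 < τ.im) {z : ℂ} (h : thetaProd τ z = 0) :
    z ∈ periodLattice τ := by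
  rcases mul_eq_zero.mp h with h | h
  · obtain ⟨n, m, hn⟩ := exists_of_halfProd_eq_zero hτ
      ((mul_eq_zero.mp h).resolve_left (exp_ne_zero _))
    exact mem_periodLattice.mpr ⟨m, -n, by push_cast; linear_combination -hn⟩
  · obtain ⟨n, m, hn⟩ := exists_of_halfProd_eq_zero hτ h
    exact mem_periodLattice.mpr ⟨-m, n + 1, by push_cast; linear_combination hn⟩

lemma analyticOrderAt_one_sub_exp_zero :
    analyticOrderAt (fun z : ℂ => 1 - exp (2 * Real.pi * I * z)) 0 = 1 := by
  have hderiv : HasDerivAt (fun z : ℂ => 1 - exp (2 * Real.pi * I * z)) (-(2 * Real.pi * I)) 0 := by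
    simpa using (((hasDerivAt_id (0 : ℂ)).const_mul (2 * Real.pi * I)).cexp).const_sub 1
  refine AnalyticAt.analyticOrderAt_eq_one_of_zero_deriv_ne_zero
    (Differentiable.analyticAt (by fun_prop) 0) (by simp) ?_
  rw [hderiv.deriv]
  exact neg_ne_zero.mpr two_pi_I_ne_zero

lemma analyticOrderAt_thetaProd_zero (hτ : 0 < τ.im) : analyticOrderAt (thetaProd τ) 0 = 1 := by
  have hd := differentiable_halfProd hτ
  set u : ℂ → ℂ := fun z => exp (-(Real.pi * I * z)) * halfProd τ (z + τ) * halfProd τ (τ - z)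
  have hu : AnalyticAt ℂ u 0 := Differentiable.analyticAt (by fun_prop) 0
  have hu0 : u 0 ≠ 0 := by simp [u, halfProd_tau_ne_zero hτ]
  have heq : thetaProd τ = (fun z => 1 - exp (2 * Real.pi * I * z)) * u :=
    funext (thetaProd_eq_mul hτ)
  rw [heq, analyticOrderAt_mul (Differentiable.analyticAt (by fun_prop) 0) hu,
    analyticOrderAt_one_sub_exp_zero, hu.analyticOrderAt_eq_zero.mpr hu0, add_zero]

lemma analyticOrderAt_thetaProd_le_one (hτ : 0 < τ.im) (z : ℂ) :
    analyticOrderAt (thetaProd τ) z ≤ 1 := by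
  have hmem := thetaProd_mem_thetaSpace hτ
  by_cases hz : thetaProd τ z = 0
  · have hperiod := hmem.2.analyticOrderAt_add hmem.1
      (mem_periodLattice_of_thetaProd_eq_zero hτ hz) 0
    rw [zero_add, analyticOrderAt_thetaProd_zero hτ] at hperiod
    exact hperiod.le
  · simp [(hmem.1.analyticAt z).analyticOrderAt_eq_zero.mpr hz]

end EulerProduct

section Theta

lemma integral_exp_two_pi_int (n : ℤ) :
    ∫ x in (0 : ℝ)..1, exp (2 * Real.pi * I * n * x) = if n = 0 then 1 else 0 := by
  rcases eq_or_ne n 0 with rfl | hn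
  · simp
  · have hexp : exp (2 * Real.pi * I * n) = 1 := by
      rw [mul_comm, exp_int_mul_two_pi_mul_I]
    rw [integral_exp_mul_complex (by simp [hn])]
    simp [hn, hexp]

lemma integral_tsum_mul_exp {c : ℤ → ℂ} (hc : Summable c) :
    ∫ x in (0 : ℝ)..1, ∑' n, c n * exp (2 * Real.pi * I * n * x) = c 0 := by
  let f : ℤ → C(ℝ, ℂ) := fun n => ⟨fun x => c n * exp (2 * Real.pi * I * n * x), by fun_prop⟩
  have hf (n : ℤ) (x : ℝ) : ‖f n x‖ = ‖c n‖ := by simp [f, Complex.norm_exp]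
  have hsum := intervalIntegral.hasSum_intervalIntegral_of_summable_norm (a := 0) (b := 1)
    (f := f) (.of_nonneg_of_le (fun _ => norm_nonneg _)
      (fun n => (ContinuousMap.norm_le _ (norm_nonneg _)).mpr fun x => (hf n x).le) hc.norm)
  have hint (n : ℤ) : ∫ x in (0 : ℝ)..1, f n x = if n = 0 then c n else 0 := by
    simp [f, integral_exp_two_pi_int]
  exact (hsum.unique (hasSum_single 0 fun n hn => by simp [hint, hn])).trans (by simp [hint])

lemma exists_jacobiTheta₂_ne_zero {τ : ℂ} (hτ : 0 < τ.im) : ∃ z, jacobiTheta₂ z τ ≠ 0 := by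
  by_contra! h
  have hsummable : Summable fun n : ℤ => jacobiTheta₂_term n 0 τ :=
    (summable_jacobiTheta₂_term_iff 0 τ).mpr hτ
  have hterm (n : ℤ) (x : ℝ) : jacobiTheta₂_term n x τ =
      jacobiTheta₂_term n 0 τ * exp (2 * Real.pi * I * n * x) := by
    rw [jacobiTheta₂_term, jacobiTheta₂_term, ← exp_add]
    ring_nf
  have hint := integral_tsum_mul_exp hsummable
  have hzero (x : ℝ) : ∑' n, jacobiTheta₂_term n 0 τ * exp (2 * Real.pi * I * n * x) = 0 := by
    simpa only [← hterm, jacobiTheta₂] using h x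
  simp only [hzero] at hint
  simp [jacobiTheta₂_term] at hint

lemma θ_eq_jacobiTheta₂ (τ z : ℂ) :
    θ τ z = I * exp (Real.pi * I * τ / 4 - Real.pi * I * z) *
      jacobiTheta₂ (z + 1 / 2 - τ / 2) τ := by
  rw [θ, jacobiTheta₂, ← tsum_mul_left, ← tsum_mul_left]
  refine tsum_congr fun n => ?_
  rw [mul_assoc I (exp _), jacobiTheta₂_term, ← exp_pi_mul_I, ← exp_int_mul, ← exp_add,
    ← exp_add, ← exp_add]
  ring_nf

lemma θ_mem_thetaSpace {τ : ℂ} (hτ : 0 < τ.im) : θ τ ∈ thetaSpace τ 1 0 := by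
  refine ⟨?_, fun z => ?_, fun z => ?_⟩
  · have hJ : Differentiable ℂ (jacobiTheta₂ · τ) :=
      fun z => differentiableAt_jacobiTheta₂_fst z hτ
    rw [funext (θ_eq_jacobiTheta₂ τ)]
    fun_prop
  · have hexp : Real.pi * I * τ / 4 - Real.pi * I * (z + 1) =
        Real.pi * I * τ / 4 - Real.pi * I * z - Real.pi * I := by ring
    rw [θ_eq_jacobiTheta₂, θ_eq_jacobiTheta₂, hexp, exp_sub_pi_mul_I,
      show z + 1 + 1 / 2 - τ / 2 = z + 1 / 2 - τ / 2 + 1 by ring, jacobiTheta₂_add_left]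
    ring
  · have hexp : Real.pi * I * τ / 4 - Real.pi * I * (z + τ) =
        Real.pi * I * τ / 4 - Real.pi * I * z - Real.pi * I * τ := by ring
    have hmult : exp (-(Real.pi * I * (2 * z + τ))) = exp (-(Real.pi * I * τ)) *
        exp (-(2 * Real.pi * I * z)) := by
      rw [← exp_add]
      ring_nf
    rw [θ_eq_jacobiTheta₂, θ_eq_jacobiTheta₂,
      show z + τ + 1 / 2 - τ / 2 = z + 1 / 2 - τ / 2 + τ by ring, jacobiTheta₂_add_left',
      show -Real.pi * I * (τ + 2 * (z + 1 / 2 - τ / 2)) = -(2 * Real.pi * I * z) - Real.pi * I by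
        ring, exp_sub_pi_mul_I, hexp, sub_eq_add_neg _ (Real.pi * I * τ), exp_add]
    simp only [Int.cast_one, one_mul, mul_zero, add_zero, zpow_one, hmult]
    ring

lemma θ_ne_zero {τ : ℂ} (hτ : 0 < τ.im) : θ τ ≠ 0 := by
  obtain ⟨z, hz⟩ := exists_jacobiTheta₂_ne_zero hτ
  refine Function.ne_iff.mpr ⟨z - 1 / 2 + τ / 2, ?_⟩
  rw [θ_eq_jacobiTheta₂, show z - 1 / 2 + τ / 2 + 1 / 2 - τ / 2 = z by ring]
  simp [exp_ne_zero, hz]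

/-- `jacobiTheta₂ (· , τ)` is even and `θ τ 0` is a multiple of its value at the half period
`1 / 2 - τ / 2`, which is carried to its opposite by a period with multiplier `-1`. -/
lemma θ_zero (τ : ℂ) : θ τ 0 = 0 := by
  have heven := jacobiTheta₂_neg_left (1 / 2 - τ / 2) τ
  have hone := jacobiTheta₂_add_left (1 / 2 - τ / 2 - 1) τ
  rw [show -(1 / 2 - τ / 2) = 1 / 2 - τ / 2 - 1 + τ by ring, jacobiTheta₂_add_left',
    show -Real.pi * I * (τ + 2 * (1 / 2 - τ / 2 - 1)) = Real.pi * I by ring,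
    exp_pi_mul_I] at heven
  rw [sub_add_cancel] at hone
  rw [θ_eq_jacobiTheta₂, zero_add]
  refine mul_eq_zero_of_right _ ?_
  linear_combination (-(1 / 2 : ℂ)) * heven + (1 / 2 : ℂ) * hone

variable {τ : ℂ}

lemma θ_eq_zero_of_mem_periodLattice (hτ : 0 < τ.im) {z : ℂ} (hz : z ∈ periodLattice τ) :
    θ τ z = 0 := by
  simpa [θ_zero] using (θ_mem_thetaSpace hτ).2.apply_add_eq_zero_iff hz 0

/-- The Jacobi triple product, up to the value of the constant: the product has simple zeros, at
which `θ` vanishes. -/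
lemma exists_θ_eq_smul_thetaProd (hτ : 0 < τ.im) : ∃ K : ℂ, K ≠ 0 ∧ θ τ = K • thetaProd τ := by
  have hθ := θ_mem_thetaSpace hτ
  have hprod0 : thetaProd τ ≠ 0 := fun h => by
    have := analyticOrderAt_thetaProd_zero hτ
    simp [h, analyticOrderAt_eq_top.mpr] at this
  obtain ⟨K, hK⟩ := exists_eq_smul_of_analyticOrderAt_le hτ hθ (thetaProd_mem_thetaSpace hτ) hprod0
    fun z => analyticOrderAt_le_of_le_one (hθ.1.analyticAt z)
      (analyticOrderAt_thetaProd_le_one hτ z) fun hz =>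
        θ_eq_zero_of_mem_periodLattice hτ (mem_periodLattice_of_thetaProd_eq_zero hτ hz)
  exact ⟨K, fun hK0 => θ_ne_zero hτ (by rw [hK, hK0, zero_smul]), hK⟩

lemma θ_eq_zero_iff (hτ : 0 < τ.im) {z : ℂ} : θ τ z = 0 ↔ z ∈ periodLattice τ := by
  obtain ⟨K, hK, hθ⟩ := exists_θ_eq_smul_thetaProd hτ
  refine ⟨fun h => mem_periodLattice_of_thetaProd_eq_zero hτ ?_, θ_eq_zero_of_mem_periodLattice hτ⟩
  simpa [hθ, hK] using h

lemma analyticOrderAt_θ_le_one (hτ : 0 < τ.im) (z : ℂ) : analyticOrderAt (θ τ) z ≤ 1 := by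
  obtain ⟨K, hK, hθ⟩ := exists_θ_eq_smul_thetaProd hτ
  have hd := (thetaProd_mem_thetaSpace hτ).1
  have hmul : θ τ = (fun _ => K) * thetaProd τ := hθ
  rw [hmul, analyticOrderAt_mul analyticAt_const (hd.analyticAt z),
    analyticAt_const.analyticOrderAt_eq_zero.mpr hK, zero_add]
  exact analyticOrderAt_thetaProd_le_one hτ z

end Theta

section Dimension

variable {τ s a : ℂ} {f : ℂ → ℂ}

lemma θ_add_mem_thetaSpace (hτ : 0 < τ.im) (a : ℂ) : (fun z => θ τ (z + a)) ∈ thetaSpace τ 1 a := by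
  have hθ := θ_mem_thetaSpace hτ
  exact ⟨hθ.1.comp (differentiable_id.add_const a), by simpa using hθ.2.comp_add_const a⟩

lemma θ_pow_mul_mem_thetaSpace (hτ : 0 < τ.im) (N : ℕ) (s : ℂ) :
    (fun z => θ τ z ^ N * θ τ (z + s)) ∈ thetaSpace τ (N + 1) s := by
  have := mul_mem_thetaSpace (prod_mem_thetaSpace (Finset.range N) fun _ _ => θ_mem_thetaSpace hτ)
    (θ_add_mem_thetaSpace hτ s)
  simp only [Finset.prod_const, Finset.sum_const, Finset.card_range, smul_zero, zero_add,
    nsmul_one] at this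
  exact this

lemma θ_add_ne_zero (hτ : 0 < τ.im) (a : ℂ) : (fun z => θ τ (z + a)) ≠ 0 := fun h =>
  θ_ne_zero hτ <| funext fun z => by simpa using congrFun h (z - a)

lemma exists_θ_ne_zero (hτ : 0 < τ.im) (s : ℂ) : ∃ z, θ τ z ≠ 0 ∧ θ τ (z + s) ≠ 0 := by
  obtain ⟨z, hz⟩ := Function.ne_iff.mp <| mul_ne_zero_of_differentiable (θ_mem_thetaSpace hτ).1
    (θ_add_mem_thetaSpace hτ s).1.continuous (θ_ne_zero hτ) (θ_add_ne_zero hτ s)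
  exact ⟨z, mul_ne_zero_iff.mp hz⟩

lemma analyticOrderAt_θ_add_le_one (hτ : 0 < τ.im) (a z : ℂ) :
    analyticOrderAt (fun w => θ τ (w + a)) z ≤ 1 :=
  (analyticOrderAt_comp_of_deriv_ne_zero (f := θ τ) (g := (· + a)) (by fun_prop)
    (by simp)).trans_le (analyticOrderAt_θ_le_one hτ (z + a))

lemma exists_eq_θ_mul_of_apply_eq_zero (hτ : 0 < τ.im) {N : ℤ} (hf : f ∈ thetaSpace τ N s)
    (hfa : f (-a) = 0) : ∃ g ∈ thetaSpace τ (N - 1) (s - a), f = (fun z => θ τ (z + a)) * g := by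
  refine exists_mem_thetaSpace_eq_mul hf (θ_add_mem_thetaSpace hτ a) (θ_add_ne_zero hτ a)
    fun z => analyticOrderAt_le_of_le_one (hf.1.analyticAt z)
      (analyticOrderAt_θ_add_le_one hτ a z) fun hz => ?_
  have hfz := hf.2.apply_add_eq_zero_iff ((θ_eq_zero_iff hτ).mp hz) (-a)
  rw [neg_add_eq_sub, add_sub_cancel_right] at hfz
  exact hfz.mpr hfa

lemma exists_apply_eq_zero_of_mem_thetaSpace (hτ : 0 < τ.im) {N : ℕ}
    (hf : f ∈ thetaSpace τ (N + 1) s) : ∃ z, f z = 0 := by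
  by_contra! h
  have hf0 : f ≠ 0 := fun hf0 => h 0 (congrFun hf0 0)
  obtain ⟨c, hc⟩ := exists_eq_smul_of_analyticOrderAt_le hτ (θ_pow_mul_mem_thetaSpace hτ N s) hf hf0
    fun z => by simp [(hf.1.analyticAt z).analyticOrderAt_eq_zero.mpr (h z)]
  have hc0 : c = 0 := by simpa [θ_zero, h] using congrFun hc (-s)
  obtain ⟨z, hz, hzs⟩ := exists_θ_ne_zero hτ s
  exact mul_ne_zero (pow_ne_zero N hz) hzs (by simpa [hc0] using congrFun hc z)

/-- Multiplication by `θ (· + a)`, as a map between spaces of theta functions. -/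
def θMul (hτ : 0 < τ.im) (N : ℤ) (s a : ℂ) :
    thetaSpace τ N (s - a) →ₗ[ℂ] thetaSpace τ (N + 1) s :=
  (LinearMap.mulLeft ℂ fun z => θ τ (z + a)).restrict fun _ hf => by
    simpa [add_comm] using mul_mem_thetaSpace (θ_add_mem_thetaSpace hτ a) hf

lemma θMul_injective (hτ : 0 < τ.im) (N : ℤ) (s a : ℂ) : Function.Injective (θMul hτ N s a) :=
  (injective_iff_map_eq_zero _).mpr fun f hf => by_contra fun hf0 =>
    mul_ne_zero_of_differentiable (θ_add_mem_thetaSpace hτ a).1 f.2.1.continuous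
      (θ_add_ne_zero hτ a) (fun h => hf0 (Subtype.ext h)) (congrArg Subtype.val hf)

lemma range_θMul (hτ : 0 < τ.im) (N : ℤ) (s a : ℂ) :
    LinearMap.range (θMul hτ N s a) = LinearMap.ker
      ((LinearMap.proj (-a) : (ℂ → ℂ) →ₗ[ℂ] ℂ).domRestrict (thetaSpace τ (N + 1) s)) := by
  refine le_antisymm ?_ fun f hf => ?_
  · rintro _ ⟨f, rfl⟩
    simp [θMul, θ_zero]
  · obtain ⟨g, hg, hfg⟩ := exists_eq_θ_mul_of_apply_eq_zero hτ f.2 (a := a) hf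
    rw [add_sub_cancel_right] at hg
    exact ⟨⟨g, hg⟩, Subtype.ext hfg.symm⟩

/-- Evaluation at a point `-a` off the zeros of `θ` and `θ (· + s)` cuts out a hyperplane, which
division by `θ (· + a)` identifies with a space of degree one less. -/
theorem rank_thetaSpace (hτ : 0 < τ.im) (N : ℕ) (s : ℂ) (h : N ≠ 0 ∨ s ∉ periodLattice τ) :
    Module.rank ℂ (thetaSpace τ N s) = N := by
  induction N generalizing s with
  | zero => simp [thetaSpace_zero_eq_bot hτ (h.resolve_left (not_not.mpr rfl))]
  | succ N ih =>
    obtain ⟨z, hz, hzs⟩ := exists_θ_ne_zero hτ s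
    set ev := (LinearMap.proj z : (ℂ → ℂ) →ₗ[ℂ] ℂ).domRestrict (thetaSpace τ (N + 1) s)
    have hsurj : Function.Surjective ev := LinearMap.surjective_of_ne_zero fun hev => by
      have := LinearMap.congr_fun hev ⟨_, θ_pow_mul_mem_thetaSpace hτ N s⟩
      simp [ev, hz, hzs] at this
    have hker : Module.rank ℂ (LinearMap.ker ev) = N := by
      have hrange := range_θMul hτ N s (-z)
      rw [neg_neg] at hrange
      rw [← hrange, rank_range_of_injective _ (θMul_injective hτ N s (-z))]
      refine ih (s - -z) (Or.inr fun hmem => hzs ((θ_eq_zero_iff hτ).mpr ?_))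
      rwa [add_comm, ← sub_neg_eq_add]
    have hrank := LinearMap.rank_range_add_rank_ker ev
    rw [LinearMap.range_eq_top.mpr hsurj, rank_top, hker, Module.rank_self] at hrank
    push_cast
    rw [← hrank, add_comm]

theorem exists_eq_smul_θ_add (hτ : 0 < τ.im) (hf : f ∈ thetaSpace τ 1 s) :
    ∃ c : ℂ, f = c • fun z => θ τ (z + s) := by
  have hrank : Module.rank ℂ (thetaSpace τ 1 s) = 1 := by
    simpa using rank_thetaSpace hτ 1 s (Or.inl one_ne_zero)
  have hθ0 : (⟨_, θ_add_mem_thetaSpace hτ s⟩ : thetaSpace τ 1 s) ≠ 0 := fun h =>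
    θ_add_ne_zero hτ s (congrArg Subtype.val h)
  obtain ⟨c, hc⟩ := (finrank_eq_one_iff_of_nonzero' _ hθ0).mp
    (Module.finrank_eq_of_rank_eq hrank) ⟨f, hf⟩
  exact ⟨c, congrArg Subtype.val hc.symm⟩

theorem exists_eq_mul_prod_θ_of_mem_thetaSpace (hτ : 0 < τ.im) {N : ℕ} (hN : N ≠ 0)
    (hf : f ∈ thetaSpace τ N s) :
    ∃ (c : ℂ) (a : Fin N → ℂ), ∑ i, a i = s ∧ ∀ z, f z = c * ∏ i, θ τ (z + a i) := by
  induction N, Nat.one_le_iff_ne_zero.mpr hN using Nat.le_induction generalizing f s with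
  | base =>
    obtain ⟨c, rfl⟩ := exists_eq_smul_θ_add hτ (by simpa using hf)
    exact ⟨c, fun _ => s, by simp⟩
  | succ N hN' ih =>
    rw [Nat.cast_succ] at hf
    obtain ⟨z, hz⟩ := exists_apply_eq_zero_of_mem_thetaSpace hτ hf
    obtain ⟨g, hg, rfl⟩ := exists_eq_θ_mul_of_apply_eq_zero hτ (a := -z) hf (by simpa using hz)
    rw [add_sub_cancel_right] at hg
    obtain ⟨c, a, ha, hga⟩ := ih (by lia) hg
    refine ⟨c, Fin.cons (-z) a, by simp [Fin.sum_univ_succ, ha], fun w => ?_⟩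
    simp only [Pi.mul_apply, hga, Fin.prod_univ_succ, Fin.cons_zero, Fin.cons_succ]
    ring

end Dimension

section Denominator

variable {τ μ η ν : ℂ} {k : ℕ} {g : ℂ → ℂ}

lemma θ_two_mul_add_mem_thetaSpace (hτ : 0 < τ.im) (w : ℂ) :
    (fun z => θ τ (2 * z + w)) ∈ thetaSpace τ 4 (2 * w) := by
  have hθ := θ_add_mem_thetaSpace hτ w
  exact ⟨hθ.1.comp (differentiable_id.const_mul 2), by simpa using hθ.2.comp_two_mul⟩

lemma Pk_eq_prod (τ η : ℂ) (k : ℕ) :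
    Pk τ η k = ∏ ℓ ∈ Finset.range k, fun z => θ τ (2 * z + 2 * (ℓ : ℂ) * η) := by
  ext z
  rw [Pk, Finset.prod_apply]

lemma Pk_mem_thetaSpace (hτ : 0 < τ.im) (η : ℂ) (k : ℕ) :
    Pk τ η k ∈ thetaSpace τ (4 * k : ℕ) (2 * k * (k - 1) * η) := by
  have hdeg : ((4 * k : ℕ) : ℤ) = ∑ _ℓ ∈ Finset.range k, (4 : ℤ) := by simp [mul_comm]
  have hchar : 2 * k * (k - 1) * η = ∑ ℓ ∈ Finset.range k, 2 * (2 * (ℓ : ℂ) * η) := by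
    induction k with
    | zero => simp
    | succ k ih =>
      rw [Finset.sum_range_succ, ← ih (by simp [mul_comm])]
      push_cast
      ring
  rw [hdeg, hchar, Pk_eq_prod]
  exact prod_mem_thetaSpace _ fun ℓ _ => θ_two_mul_add_mem_thetaSpace hτ (2 * ℓ * η)

lemma Pk_ne_zero (hτ : 0 < τ.im) (η : ℂ) (k : ℕ) : Pk τ η k ≠ 0 := by
  rw [Pk_eq_prod]
  refine prod_ne_zero_of_differentiable _ (fun ℓ _ => (θ_two_mul_add_mem_thetaSpace hτ _).1)
    fun ℓ _ h => θ_ne_zero hτ <| funext fun z => ?_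
  simpa [mul_div_cancel₀] using congrFun h ((z - 2 * ℓ * η) / 2)

lemma isQuasiPeriodic_zero_iff (hν : exp (8 * Real.pi * I * ν) = μ) :
    IsQuasiPeriodic τ 0 (-(4 * k * ν)) g ↔
      (∀ z, g (z + 1) = g z) ∧ ∀ z, g (z + τ) = μ ^ k * g z := by
  have hμ (z : ℂ) :
      exp (-(Real.pi * I * ((0 : ℤ) * (2 * z + τ) + 2 * -(4 * k * ν)))) = μ ^ k := by
    rw [← hν, ← exp_nat_mul]
    push_cast
    ring_nf
  refine ⟨fun hg => ⟨fun z => ?_, fun z => ?_⟩, fun hg => ⟨fun z => ?_, fun z => ?_⟩⟩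
  · simpa using hg.add_one z
  · simpa only [hμ, zpow_zero, one_mul] using hg.add_tau z
  · simpa using hg.1 z
  · simpa only [hμ, zpow_zero, one_mul] using hg.2 z

lemma memVk.exists_mem_thetaSpace (hτ : 0 < τ.im) (hg : memVk τ μ η k g)
    (hν : exp (8 * Real.pi * I * ν) = μ) :
    ∃ h ∈ thetaSpace τ (4 * k : ℕ) (2 * k * (k - 1) * η - 4 * k * ν),
      ∀ z, Pk τ η k z ≠ 0 → g z * Pk τ η k z = h z := by
  obtain ⟨-, hg1, hgτ, h, hd, hgh⟩ := hg
  have hP := Pk_mem_thetaSpace hτ η k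
  have hgP := ((isQuasiPeriodic_zero_iff hν).mpr ⟨hg1, hgτ⟩).mul hP.2
  rw [zero_add, neg_add_eq_sub] at hgP
  exact ⟨h, ⟨hd, hgP.of_eq_off_zeros hP.2 hP.1 (Pk_ne_zero hτ η k) hd.continuous hgh⟩, hgh⟩

lemma memVk_div_Pk (hτ : 0 < τ.im) (hν : exp (8 * Real.pi * I * ν) = μ) {h : ℂ → ℂ}
    (hh : h ∈ thetaSpace τ (4 * k : ℕ) (2 * k * (k - 1) * η - 4 * k * ν)) :
    memVk τ μ η k (h / Pk τ η k) := by
  have hP := Pk_mem_thetaSpace hτ η k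
  have hquot := hh.2.div hP.2
  rw [sub_self, sub_sub_cancel_left] at hquot
  obtain ⟨hg1, hgτ⟩ := (isQuasiPeriodic_zero_iff hν).mp hquot
  exact ⟨fun z _ => (hh.1.analyticAt z).meromorphicAt.div (hP.1.analyticAt z).meromorphicAt,
    hg1, hgτ, h, hh.1, fun z hz => div_mul_cancel₀ _ hz⟩

theorem exists_linearIndependent_memVk (hτ : 0 < τ.im) (hμ : μ ≠ 0) (η : ℂ) (hk : 1 ≤ k) :
    ∃ b : Fin (4 * k) → ℂ → ℂ, (∀ i, memVk τ μ η k (b i)) ∧ LinearIndependent ℂ b ∧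
      ∀ g, memVk τ μ η k g → ∃ c : Fin (4 * k) → ℂ,
        ∀ z, Pk τ η k z ≠ 0 → g z = ∑ i, c i * b i z := by
  obtain ⟨ν, hν⟩ : ∃ ν, exp (8 * Real.pi * I * ν) = μ :=
    ⟨log μ / (8 * Real.pi * I), by rw [mul_div_cancel₀ _ (by simp [Real.pi_ne_zero]), exp_log hμ]⟩
  have hP := Pk_mem_thetaSpace hτ η k
  have hrank := rank_thetaSpace hτ (4 * k) (2 * k * (k - 1) * η - 4 * k * ν) (Or.inl (by lia))
  have := Module.finite_of_rank_eq_nat hrank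
  set B := Module.finBasisOfFinrankEq ℂ _ (Module.finrank_eq_of_rank_eq hrank)
  refine ⟨fun i => (B i).1 / Pk τ η k, fun i => memVk_div_Pk hτ hν (B i).2,
    linearIndependent_div hP.1 (Pk_ne_zero hτ η k) (fun i => (B i).2.1)
      (B.linearIndependent.map' (Submodule.subtype _) (Submodule.ker_subtype _)), fun g hg => ?_⟩
  obtain ⟨h, hh, hgh⟩ := hg.exists_mem_thetaSpace hτ hν
  have hsum (z : ℂ) : h z = ∑ i, B.repr ⟨h, hh⟩ i * (B i).1 z := by
    have hrepr := congrFun (congrArg Subtype.val (B.sum_repr ⟨h, hh⟩)) z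
    simpa [-Module.Basis.sum_repr] using hrepr.symm
  refine ⟨B.repr ⟨h, hh⟩, fun z hz => ?_⟩
  simp only [Pi.div_apply, ← mul_div_assoc, ← Finset.sum_div]
  rw [← hsum, eq_div_iff hz, hgh z hz]

theorem memVk.exists_eq_mul_prod_θ (hτ : 0 < τ.im) (hk : 1 ≤ k) (hg : memVk τ μ η k g)
    (hν : exp (8 * Real.pi * I * ν) = μ) :
    ∃ (c : ℂ) (a : Fin (4 * k) → ℂ), ∑ i, a i = 2 * k * (k - 1) * η ∧
      ∀ z, Pk τ η k z ≠ 0 → g z * Pk τ η k z = c * ∏ i, θ τ (z + a i - ν) := by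
  obtain ⟨h, hh, hgh⟩ := hg.exists_mem_thetaSpace hτ hν
  obtain ⟨c, a, ha, hprod⟩ := exists_eq_mul_prod_θ_of_mem_thetaSpace hτ (by lia) hh
  refine ⟨c, fun i => a i + ν, by simp [Finset.sum_add_distrib, ha], fun z hz => ?_⟩
  simp only [hgh z hz, hprod, ← add_assoc, add_sub_cancel_right]

end Denominator

theorem statement0_general (τ : ℂ) (hτ : 0 < τ.im) (μ : ℂ) (hμ : μ ≠ 0) (η : ℂ)
    (k : ℕ) (hk : 1 ≤ k) :
    (∃ b : Fin (4 * k) → (ℂ → ℂ),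
      (∀ i, memVk τ μ η k (b i)) ∧ LinearIndependent ℂ b ∧
      ∀ g, memVk τ μ η k g → ∃ c : Fin (4 * k) → ℂ,
        ∀ z, Pk τ η k z ≠ 0 → g z = ∑ i, c i * b i z) ∧
    (∀ g, memVk τ μ η k g → ∀ ν : ℂ, exp (8 * Real.pi * I * ν) = μ →
      ∃ (c : ℂ) (a : Fin (4 * k) → ℂ), (∑ i, a i) = 2 * (k : ℂ) * ((k : ℂ) - 1) * η ∧
        ∀ z, Pk τ η k z ≠ 0 → g z * Pk τ η k z = c * ∏ i, θ τ (z + a i - ν)) :=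
  ⟨exists_linearIndependent_memVk hτ hμ η hk, fun _ hg _ hν => hg.exists_eq_mul_prod_θ hτ hk hν⟩

/-- `V_k(μ)` is `4k`-dimensional, and every `g ∈ V_k(μ)` has the form
`g(z) = c·∏_{i=1}^{4k} θ(z+aᵢ−ν)/P_k(η,z)` with `∑ aᵢ = 2k(k−1)η`, where
`exp(8iπν) = μ` and `Re ν ∈ [0,1/4)`. -/
theorem statement0 (τ : ℂ) (hτ : 0 < τ.im) (μ : ℂ) (hμ : μ ≠ 0) (η : ℂ)
    (k : ℕ) (hk : 1 ≤ k) :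
    (∃ b : Fin (4 * k) → (ℂ → ℂ),
      (∀ i, memVk τ μ η k (b i)) ∧ LinearIndependent ℂ b ∧
      ∀ g, memVk τ μ η k g → ∃ c : Fin (4 * k) → ℂ,
        ∀ z, Pk τ η k z ≠ 0 → g z = ∑ i, c i * b i z) ∧
    (∀ g, memVk τ μ η k g → ∀ ν : ℂ,
      Complex.exp (8 * Real.pi * I * ν) = μ → ν.re ∈ Set.Ico (0 : ℝ) (1/4) →
      ∃ (c : ℂ) (a : Fin (4 * k) → ℂ), (∑ i, a i) = 2 * (k : ℂ) * ((k : ℂ) - 1) * η ∧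
        ∀ z, Pk τ η k z ≠ 0 → g z * Pk τ η k z = c * ∏ i, θ τ (z + a i - ν)) := by
  have h := statement0_general τ hτ μ hμ η k hk
  exact ⟨h.1, fun g hg ν hν _ => h.2 g hg ν hν⟩
end
end

section
/- Let η ∈ ℂ∖{0} satisfy nη ∉ Λ for every positive integer n, let ν ∈ ℂ, and set μ = exp(8iπν). Let k ≥ 1 and let c_{−k},…,c_k be meromorphic functions on ℂ, and let A act on meromorphic functions by (AF)(z) = ∑_{j=−k}^{k} c_j(z)F(z+jη). Then A maps ℳ_t into ℳ_t for every t ∈ {0,1,2,3} if and only if the family (c_j)_{|j|≤k} satisfies conditions (i)–(iii). -/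
open Complex Filter

noncomputable section

/-- The half-periods `ω₀ = 0, ω₁ = 1/2, ω₂ = (1+τ)/2, ω₃ = τ/2`. -/
def ωh (τ : ℂ) : Fin 4 → ℂ := ![0, 1/2, (1 + τ)/2, τ/2]

/-- `λ₀ = λ₁ = 0`, `λ₂ = λ₃ = 8iπν`. -/
def lamh (ν : ℂ) : Fin 4 → ℂ :=
  ![0, 0, 8 * Real.pi * I * ν, 8 * Real.pi * I * ν]

/-- `ε₀ = ε₁ = 1`, `ε₂ = ε₃ = μ`. -/
def εh (μ : ℂ) : Fin 4 → ℂ := ![1, 1, μ, μ]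

/-- A meromorphic function is regular (analytic after removing a removable
singularity) at a point. -/
def RegularAt (g : ℂ → ℂ) (p : ℂ) : Prop :=
  ∃ h : ℂ → ℂ, AnalyticAt ℂ h p ∧ ∀ᶠ z in nhdsWithin p {p}ᶜ, g z = h z

/-- `g` has at most a simple pole at `p`, with residue `r` (`r = 0` exactly when
`g` is regular at `p`). -/
def SimplePoleAt (g : ℂ → ℂ) (p r : ℂ) : Prop :=
  ∃ h : ℂ → ℂ, AnalyticAt ℂ h p ∧ ∀ᶠ z in nhdsWithin p {p}ᶜ, g z = r / (z - p) + h z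

/-- Membership in the space `ℳ_t`. -/
def memM (τ η ν : ℂ) (t : Fin 4) (g : ℂ → ℂ) : Prop :=
  MeromorphicOn g Set.univ ∧ (∀ k : ℤ, RegularAt g (ωh τ t + (k : ℂ) * η)) ∧
  (∀ z, g (ωh τ t - z) = Complex.exp (lamh ν t * z / η) * g (ωh τ t + z))

/-- Conditions (i)–(iii) on a family `(c_j)_{|j|≤k}` of meromorphic coefficients. -/
def Conds (τ μ η : ℂ) (k : ℕ) (c : ℤ → ℂ → ℂ) : Prop :=
  (∀ j : ℤ, |j| ≤ (k : ℤ) → ∀ t : Fin 4, ∀ z : ℂ,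
      c j (z + ωh τ t) = εh μ t ^ j * c (-j) (-z + ωh τ t)) ∧
  ∃ r : ℤ → Fin 4 → ℤ → ℂ,
    (∀ j : ℤ, |j| ≤ (k : ℤ) → ∀ t : Fin 4, ∀ ℓ : ℤ,
        SimplePoleAt (c j) (ωh τ t - (ℓ : ℂ) * η) (r j t ℓ)) ∧
    (∀ j : ℤ, |j| ≤ (k : ℤ) → ∀ t : Fin 4, r j t j = 0) ∧
    (∀ j : ℤ, |j| ≤ (k : ℤ) → ∀ t : Fin 4, ∀ ℓ : ℤ, (k : ℤ) < |2 * ℓ - j| → r j t ℓ = 0) ∧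
    (∀ j : ℤ, |j| ≤ (k : ℤ) → ∀ t : Fin 4, ∀ ℓ : ℤ, |2 * ℓ - j| ≤ (k : ℤ) →
        r j t ℓ = -(εh μ t ^ (j - ℓ)) * r (2 * ℓ - j) t ℓ)

/-!
Moving `ω_t` to the origin and multiplying by `exp(λ_t x/2η)` turns `ℳ_t` into the even meromorphic
functions regular on `ℤη`, and `A` into another difference operator `∑ d_j(z) exp(jη∂_z)`. If
`d_j(z) = d_{-j}(-z)`, this operator preserves evenness. At `-ℓη` the residue of its value on `F`
is `∑ r_j F((j-ℓ)η)`, which vanishes because `r` is odd and `F` even under `j ↦ 2ℓ - j`.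

Conversely, test the operator on even polynomials. Around `-ℓη` the even function `F` can be made
to vanish to high order at every `(m-ℓ)η` except `±(j-ℓ)η`, so that only the pair `d_j`,
`d_{2ℓ-j}` contributes to the singular part; two such `F` force simple poles with opposite
residues. Likewise, interpolating at the points `z + mη` with `2z ∉ ℤη` isolates
`d_j(z) = d_{-j}(-z)`. For `2z ∈ ℤη` this interpolation breaks down. There the reflection at `ω_t`
is the product of the reflections at the other three half-periods, which act at generic points.
-/

section LocalBehaviour

open scoped Topology

variable {f g : ℂ → ℂ} {p a r s : ℂ}

theorem regularAt_iff_meromorphicOrderAt_nonneg :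
    RegularAt f p ↔ MeromorphicAt f p ∧ 0 ≤ meromorphicOrderAt f p := by
  constructor
  · rintro ⟨h, hh, hfh⟩
    exact ⟨hh.meromorphicAt.congr (EventuallyEq.symm hfh),
      (meromorphicOrderAt_congr hfh).symm ▸ hh.meromorphicOrderAt_nonneg⟩
  · rintro ⟨hf, hord⟩
    exact ⟨toMeromorphicNFAt f p,
      hf.meromorphicOrderAt_nonneg_iff_analyticAt_toMeromorphicNFAt.1 hord,
      hf.eq_nhdsNE_toMeromorphicNFAt⟩

theorem regularAt_iff_exists_tendsto :
    RegularAt f p ↔ MeromorphicAt f p ∧ ∃ v, Tendsto f (𝓝[≠] p) (𝓝 v) := by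
  rw [regularAt_iff_meromorphicOrderAt_nonneg]
  exact and_congr_right fun hf => (tendsto_nhds_iff_meromorphicOrderAt_nonneg hf).symm

theorem regularAt_mul_iff_of_ne_zero (hg : AnalyticAt ℂ g p) (hgp : g p ≠ 0) :
    RegularAt (fun z => g z * f z) p ↔ RegularAt f p := by
  change RegularAt (g * f) p ↔ _
  simp only [regularAt_iff_meromorphicOrderAt_nonneg, meromorphicAt_mul_iff_of_ne_zero hg hgp,
    meromorphicOrderAt_mul_of_ne_zero hg hgp]

theorem regularAt_comp_add_const_iff :
    RegularAt (fun z => f (z + a)) p ↔ RegularAt f (p + a) := by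
  simp only [regularAt_iff_meromorphicOrderAt_nonneg,
    meromorphicAt_fun_comp_add_const_iff_meromorphicAt,
    meromorphicOrderAt_fun_comp_add_const_eq_meromorphicOrderAt]

theorem regularAt_of_differentiable (hf : Differentiable ℂ f) : RegularAt f p :=
  ⟨f, hf.analyticAt p, .of_forall fun _ => rfl⟩

theorem simplePoleAt_zero_iff_regularAt : SimplePoleAt f p 0 ↔ RegularAt f p := by
  simp only [SimplePoleAt, RegularAt, zero_div, zero_add]

theorem simplePoleAt_iff_tendsto :
    SimplePoleAt f p r ↔
      MeromorphicAt f p ∧ Tendsto (fun z => (z - p) * f z) (𝓝[≠] p) (𝓝 r) := by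
  constructor
  · rintro ⟨h, hh, hfh⟩
    refine ⟨MeromorphicAt.congr (f := fun z => r / (z - p) + h z) (by fun_prop)
      (EventuallyEq.symm hfh), ?_⟩
    have hlim : Tendsto (fun z => r + (z - p) * h z) (𝓝[≠] p) (𝓝 r) := by
      have hcont : ContinuousAt (fun z => r + (z - p) * h z) p := by fun_prop
      simpa using hcont.tendsto.mono_left nhdsWithin_le_nhds
    refine hlim.congr' ?_
    filter_upwards [hfh, self_mem_nhdsWithin] with z hz hzp
    rw [hz, mul_add, mul_div_cancel₀ r (sub_ne_zero.2 hzp)]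
  · rintro ⟨hf, hlim⟩
    obtain ⟨H, hH, hfH⟩ : RegularAt (fun z => (z - p) * f z) p :=
      regularAt_iff_exists_tendsto.2 ⟨by fun_prop, r, hlim⟩
    have hHp : H p = r := tendsto_nhds_unique
      (hH.continuousAt.tendsto.mono_left nhdsWithin_le_nhds) (hlim.congr' hfH)
    obtain ⟨_, hser⟩ := hH
    refine ⟨dslope H p, hser.has_fpower_series_dslope_fslope.analyticAt, ?_⟩
    filter_upwards [hfH, self_mem_nhdsWithin] with z hz hzp
    have hzp' : z - p ≠ 0 := sub_ne_zero.2 hzp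
    rw [dslope_of_ne _ hzp, slope_def_field, ← hz, hHp]
    field_simp
    ring

namespace SimplePoleAt

theorem residue_unique (hr : SimplePoleAt f p r) (hs : SimplePoleAt f p s) : r = s :=
  tendsto_nhds_unique (simplePoleAt_iff_tendsto.1 hr).2 (simplePoleAt_iff_tendsto.1 hs).2

theorem const_mul (hf : SimplePoleAt f p r) (a : ℂ) :
    SimplePoleAt (fun z => a * f z) p (a * r) := by
  obtain ⟨h, hh, hfh⟩ := hf
  refine ⟨fun z => a * h z, by fun_prop, hfh.mono fun z hz => ?_⟩
  simp only [hz]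
  ring

end SimplePoleAt

theorem tendsto_comp_add_const_nhdsNE_iff {l : Filter ℂ} :
    Tendsto (fun z => f (z + a)) (𝓝[≠] p) l ↔ Tendsto f (𝓝[≠] (p + a)) l := by
  rw [← map_add_right_nhdsNE, tendsto_map'_iff, Function.comp_def]

theorem tendsto_comp_neg_nhdsNE_iff {l : Filter ℂ} :
    Tendsto (fun z => f (-z)) (𝓝[≠] p) l ↔ Tendsto f (𝓝[≠] (-p)) l := by
  rw [← neg_nhdsNE, ← Filter.map_neg, tendsto_map'_iff, Function.comp_def]

theorem simplePoleAt_comp_add_const_iff :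
    SimplePoleAt (fun z => f (z + a)) p r ↔ SimplePoleAt f (p + a) r := by
  simp only [simplePoleAt_iff_tendsto, meromorphicAt_fun_comp_add_const_iff_meromorphicAt,
    ← tendsto_comp_add_const_nhdsNE_iff (f := fun z => (z - (p + a)) * f z),
    add_sub_add_right_eq_sub]

theorem eventually_tendsto_pow_mul_zero (hf : MeromorphicAt f p) :
    ∀ᶠ n : ℕ in atTop, Tendsto (fun z => (z - p) ^ n * f z) (𝓝[≠] p) (𝓝 0) := by
  obtain ⟨m, hm⟩ := hf
  filter_upwards [eventually_gt_atTop m] with n hn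
  have hcont : ContinuousAt (fun z => (z - p) ^ (n - m) * ((z - p) ^ m • f z)) p :=
    ContinuousAt.mul (by fun_prop) hm.continuousAt
  have hlim := hcont.tendsto.mono_left (nhdsWithin_le_nhds (s := {p}ᶜ))
  rw [sub_self, zero_pow (Nat.sub_ne_zero_of_lt hn), zero_mul] at hlim
  refine hlim.congr fun z => ?_
  rw [smul_eq_mul, ← mul_assoc, ← pow_add, Nat.sub_add_cancel hn.le]

end LocalBehaviour

section EvenFunctions

open scoped Topology

variable {η : ℂ} {s : Finset ℤ} {d : ℤ → ℂ → ℂ} {F : ℂ → ℂ}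

/-- The space of even meromorphic functions regular on `ℤη`: what `ℳ_t` becomes once its centre
`ω_t` is moved to `0` and its multiplier `exp(λ_t z/η)` is normalised to `1`. -/
def IsEvenRegular (η : ℂ) (F : ℂ → ℂ) : Prop :=
  Meromorphic F ∧ (∀ m : ℤ, RegularAt F (m * η)) ∧ F.Even

/-- The difference operator `∑_{j ∈ s} d_j(z) exp(jη∂_z)`. -/
def shiftSum (η : ℂ) (s : Finset ℤ) (d : ℤ → ℂ → ℂ) (F : ℂ → ℂ) : ℂ → ℂ :=
  fun z => ∑ j ∈ s, d j z * F (z + j * η)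

/-- Conditions (ii) and (iii) at centre `0` with `μ = 1`: each `d_j` has at most simple poles on
`ℤη`, and the residues at `-ℓη` are antisymmetric under `j ↦ 2ℓ - j`. The index `j` runs over all
of `ℤ`, so a coefficient vanishing identically forces its mirror images to be regular. -/
def HasAntisymmResidues (η : ℂ) (d : ℤ → ℂ → ℂ) : Prop :=
  ∃ r : ℤ → ℤ → ℂ, (∀ j ℓ : ℤ, SimplePoleAt (d j) (-ℓ * η) (r j ℓ)) ∧
    ∀ j ℓ, r j ℓ = -r (2 * ℓ - j) ℓ

theorem sum_mul_reflect_eq_zero {ρ v : ℤ → ℂ} (hρs : ∀ j ∉ s, ρ j = 0) (ℓ : ℤ)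
    (hρ : ∀ j, ρ j = -ρ (2 * ℓ - j)) (hv : v.Even) : ∑ j ∈ s, ρ j * v (j - ℓ) = 0 := by
  rw [← finsum_eq_sum_of_support_subset (fun j => ρ j * v (j - ℓ))
    (Function.support_subset_iff'.2 fun j hj => by rw [hρs j hj, zero_mul]), ← self_eq_neg]
  calc ∑ᶠ j, ρ j * v (j - ℓ) = ∑ᶠ j, ρ (2 * ℓ - j) * v (2 * ℓ - j - ℓ) :=
        (finsum_comp_equiv (Equiv.subLeft (2 * ℓ))).symm
    _ = ∑ᶠ j, -(ρ j * v (j - ℓ)) := finsum_congr fun j => by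
        rw [hρ j, show 2 * ℓ - j - ℓ = -(j - ℓ) by ring, hv]
        ring
    _ = -∑ᶠ j, ρ j * v (j - ℓ) := finsum_neg_distrib _

theorem shiftSum_eq_finsum (hds : ∀ j ∉ s, d j = 0) (z : ℂ) :
    shiftSum η s d F z = ∑ᶠ j : ℤ, d j z * F (z + j * η) :=
  (finsum_eq_sum_of_support_subset _ (Function.support_subset_iff'.2 fun j hj => by
    rw [hds j hj, Pi.zero_apply, zero_mul])).symm

theorem even_shiftSum (hds : ∀ j ∉ s, d j = 0) (hsymm : ∀ j z, d j z = d (-j) (-z))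
    (hF : F.Even) : (shiftSum η s d F).Even := fun z => by
  rw [shiftSum_eq_finsum hds, shiftSum_eq_finsum hds, ← finsum_comp_equiv (Equiv.neg ℤ)]
  refine finsum_congr fun j => ?_
  rw [Equiv.neg_apply, ← hsymm, ← hF]
  push_cast
  ring_nf

theorem meromorphic_shiftSum (hd : ∀ j, Meromorphic (d j)) (hF : Meromorphic F) :
    Meromorphic (shiftSum η s d F) :=
  Meromorphic.fun_sum fun j _ =>
    (hd j).fun_mul fun _ =>
      meromorphicAt_fun_comp_add_const_iff_meromorphicAt.2 (hF _)

theorem regularAt_shiftSum (hd : ∀ j, Meromorphic (d j)) (hds : ∀ j ∉ s, d j = 0)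
    (hres : HasAntisymmResidues η d) (hF : IsEvenRegular η F) (m : ℤ) :
    RegularAt (shiftSum η s d F) (m * η) := by
  obtain ⟨r, hr, hanti⟩ := hres
  obtain ⟨hFmer, hFreg, hFeven⟩ := hF
  choose v hv using fun n => (regularAt_iff_exists_tendsto.1 (hFreg n)).2
  have hveven : v.Even := fun n => tendsto_nhds_unique (hv (-n)) <| by
    push_cast
    rw [neg_mul, ← tendsto_comp_neg_nhdsNE_iff]
    exact (hv n).congr fun z => (hFeven z).symm
  obtain ⟨ℓ, rfl⟩ : ∃ ℓ, m = -ℓ := ⟨-m, (neg_neg m).symm⟩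
  push_cast
  rw [← simplePoleAt_zero_iff_regularAt, simplePoleAt_iff_tendsto]
  refine ⟨meromorphic_shiftSum hd hFmer _, ?_⟩
  have hsupp : ∀ j ∉ s, r j ℓ = 0 := fun j hj => (hr j ℓ).residue_unique <|
    simplePoleAt_zero_iff_regularAt.2 <| hds j hj ▸ regularAt_of_differentiable
      (differentiable_const 0)
  rw [← sum_mul_reflect_eq_zero hsupp ℓ (fun j => hanti j ℓ) hveven]
  have hterm : ∀ j ∈ s, Tendsto (fun z => (z - -ℓ * η) * d j z * F (z + j * η))
      (𝓝[≠] (-ℓ * η)) (𝓝 (r j ℓ * v (j - ℓ))) := fun j _ => by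
    refine (simplePoleAt_iff_tendsto.1 (hr j ℓ)).2.mul (tendsto_comp_add_const_nhdsNE_iff.2 ?_)
    have hpt : -(ℓ : ℂ) * η + j * η = ((j - ℓ : ℤ) : ℂ) * η := by
      push_cast
      ring
    exact hpt ▸ hv (j - ℓ)
  refine (tendsto_finsetSum s hterm).congr fun z => ?_
  simp only [shiftSum, Finset.mul_sum, mul_assoc]

theorem isEvenRegular_shiftSum (hd : ∀ j, Meromorphic (d j)) (hds : ∀ j ∉ s, d j = 0)
    (hsymm : ∀ j z, d j z = d (-j) (-z)) (hres : HasAntisymmResidues η d)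
    (hF : IsEvenRegular η F) : IsEvenRegular η (shiftSum η s d F) :=
  ⟨meromorphic_shiftSum hd hF.1, regularAt_shiftSum hd hds hres hF,
    even_shiftSum hds hsymm hF.2.2⟩

/-- The even polynomial vanishing to order at least `N` at the points of `T` and their
negatives. -/
def evenProd (T : Finset ℂ) (N : ℕ) : ℂ → ℂ :=
  fun x => ∏ b ∈ T, (x ^ 2 - b ^ 2) ^ N

section EvenProd

variable {T : Finset ℂ} {N : ℕ} {a b : ℂ}

theorem differentiable_evenProd : Differentiable ℂ (evenProd T N) := by
  unfold evenProd
  fun_prop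

theorem even_evenProd : (evenProd T N).Even := fun x => by
  simp only [evenProd, neg_sq]

theorem evenProd_ne_zero (h : ∀ b ∈ T, a ≠ b ∧ a ≠ -b) : evenProd T N a ≠ 0 :=
  Finset.prod_ne_zero_iff.2 fun b hb => pow_ne_zero _ <| sub_ne_zero.2 fun hab =>
    (sq_eq_sq_iff_eq_or_eq_neg.1 hab).elim (h b hb).1 (h b hb).2

theorem exists_evenProd_eq_pow_mul (hb : b ∈ T) :
    ∃ R : ℂ → ℂ, Continuous R ∧ ∀ x, evenProd T N x = (x - b) ^ N * R x := by
  refine ⟨fun x => (x + b) ^ N * evenProd (T.erase b) N x,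
    (by fun_prop : Continuous fun x => (x + b) ^ N).mul differentiable_evenProd.continuous,
    fun x => ?_⟩
  rw [evenProd, ← Finset.mul_prod_erase T _ hb, ← mul_assoc, ← mul_pow, evenProd]
  ring_nf

theorem tendsto_mul_evenProd {f Q : ℂ → ℂ} {p c : ℂ}
    (hf : Tendsto (fun z => (z - p) ^ N * f z) (𝓝[≠] p) (𝓝 0)) (hpc : p + c ∈ T)
    (hQ : Continuous Q) :
    Tendsto (fun z => f z * (evenProd T N (z + c) * Q (z + c))) (𝓝[≠] p) (𝓝 0) := by
  obtain ⟨R, hR, hTR⟩ := exists_evenProd_eq_pow_mul (N := N) hpc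
  have hRQ : Continuous fun z => R (z + c) * Q (z + c) := by fun_prop
  rw [← zero_mul (R (p + c) * Q (p + c))]
  refine (hf.mul ((hRQ.tendsto p).mono_left nhdsWithin_le_nhds)).congr fun z => ?_
  rw [hTR, add_sub_add_right_eq_sub]
  ring

end EvenProd

theorem isEvenRegular_of_differentiable (hF : Differentiable ℂ F) (heven : F.Even) :
    IsEvenRegular η F :=
  ⟨fun z => (hF.analyticAt z).meromorphicAt, fun _ => regularAt_of_differentiable hF, heven⟩

theorem reflect_of_even_shiftSum (hη : η ≠ 0) (hds : ∀ j ∉ s, d j = 0)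
    (heven : ∀ F, IsEvenRegular η F → (shiftSum η s d F).Even) {z : ℂ}
    (hz : ∀ n : ℤ, 2 * z ≠ n * η) (j : ℤ) : d j z = d (-j) (-z) := by
  set U := (s ∪ s.image Neg.neg).erase j with hU
  set F := evenProd (U.image fun i : ℤ => z + i * η) 1 with hF
  have hFeven : F.Even := even_evenProd
  have hFU : ∀ i ∈ U, F (z + i * η) = 0 := fun i hi => by
    obtain ⟨R, -, hR⟩ := exists_evenProd_eq_pow_mul (N := 1)
      (Finset.mem_image_of_mem (fun i : ℤ => z + i * η) hi)
    rw [hF, hR, sub_self, pow_one, zero_mul]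
  have hFj : F (z + j * η) ≠ 0 := evenProd_ne_zero <| by
    simp only [Finset.mem_image, forall_exists_index, and_imp, forall_apply_eq_imp_iff₂]
    refine fun i hi => ⟨fun h => Finset.ne_of_mem_erase hi ?_, fun h => hz (-(i + j)) ?_⟩
    · exact (Int.cast_injective (mul_right_cancel₀ hη (add_left_cancel h))).symm
    · push_cast
      linear_combination h
  have hpos : shiftSum η s d F z = d j z * F (z + j * η) := by
    rw [shiftSum_eq_finsum hds]
    refine finsum_eq_single _ j fun i hij => ?_
    by_cases hi : i ∈ s
    · rw [hFU i (by simp [hU, hi, hij]), mul_zero]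
    · rw [hds i hi, Pi.zero_apply, zero_mul]
  have hneg : shiftSum η s d F (-z) = d (-j) (-z) * F (z + j * η) := by
    have hrefl : ∀ i : ℤ, F (-z + i * η) = F (z + (-i : ℤ) * η) := fun i => by
      rw [← hFeven]
      push_cast
      ring_nf
    rw [shiftSum_eq_finsum hds, finsum_eq_single _ (-j), hrefl, neg_neg]
    intro i hij
    by_cases hi : i ∈ s
    · rw [hrefl, hFU (-i) (by simp [hU, hi, neg_eq_iff_eq_neg, hij]), mul_zero]
    · rw [hds i hi, Pi.zero_apply, zero_mul]
  refine mul_right_cancel₀ hFj ?_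
  rw [← hpos, ← hneg]
  exact (heven F (isEvenRegular_of_differentiable differentiable_evenProd hFeven) z).symm

theorem exists_even_isolating (hη : η ≠ 0) (hd : ∀ j, Meromorphic (d j)) (hds : ∀ j ∉ s, d j = 0)
    (hreg : ∀ F, IsEvenRegular η F → ∀ m : ℤ, RegularAt (shiftSum η s d F) (m * η)) (j ℓ : ℤ) :
    ∃ G : ℂ → ℂ, Differentiable ℂ G ∧ G.Even ∧ G ((j - ℓ) * η) ≠ 0 ∧
      ∀ Q : ℂ → ℂ, Differentiable ℂ Q → Q.Even → ∃ v,
        Tendsto (fun z => ∑ m ∈ {j, 2 * ℓ - j}, d m z * (G (z + m * η) * Q (z + m * η)))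
          (𝓝[≠] (-ℓ * η)) (𝓝 v) := by
  set U : Finset ℤ := {j, 2 * ℓ - j} with hU
  obtain ⟨N, hN⟩ : ∃ N : ℕ, ∀ m ∈ s,
      Tendsto (fun z => (z - -ℓ * η) ^ N * d m z) (𝓝[≠] (-ℓ * η)) (𝓝 0) :=
    ((Filter.eventually_all_finset s).2 fun m _ =>
      eventually_tendsto_pow_mul_zero (hd m (-ℓ * η))).exists
  set T := (s \ U).image fun m : ℤ => ((m : ℂ) - ℓ) * η
  have hGdiff : Differentiable ℂ (evenProd T N) := differentiable_evenProd
  have hGeven : (evenProd T N).Even := even_evenProd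
  refine ⟨evenProd T N, hGdiff, hGeven, evenProd_ne_zero ?_, fun Q hQ hQeven => ?_⟩
  · simp only [T, Finset.mem_image, forall_exists_index, and_imp, forall_apply_eq_imp_iff₂]
    intro m hm
    have hmU := (Finset.mem_sdiff.1 hm).2
    simp only [hU, Finset.mem_insert, Finset.mem_singleton, not_or] at hmU
    refine ⟨fun h => hmU.1 ?_, fun h => hmU.2 ?_⟩
    · exact_mod_cast (sub_left_injective (mul_right_cancel₀ hη h)).symm
    · have hcast : (j : ℂ) - ℓ = -(m - ℓ) := mul_right_cancel₀ hη (h.trans (neg_mul _ _).symm)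
      have : j - ℓ = -(m - ℓ) := mod_cast hcast
      omega
  have hrest : ∀ m ∈ s \ U, Tendsto (fun z => d m z * (evenProd T N (z + m * η) * Q (z + m * η)))
      (𝓝[≠] (-ℓ * η)) (𝓝 0) := fun m hm => by
    refine tendsto_mul_evenProd (hN m (Finset.mem_sdiff.1 hm).1)
      (Finset.mem_image.2 ⟨m, hm, ?_⟩) hQ.continuous
    ring
  have htest : IsEvenRegular η (evenProd T N * Q) :=
    isEvenRegular_of_differentiable (hGdiff.mul hQ) (hGeven.mul_even hQeven)
  have hsum := hreg _ htest (-ℓ)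
  rw [Int.cast_neg] at hsum
  obtain ⟨-, v, hv⟩ := regularAt_iff_exists_tendsto.1 hsum
  refine ⟨v, ?_⟩
  rw [← sub_zero v, ← Finset.sum_const_zero (s := s \ U)]
  refine (hv.sub (tendsto_finsetSum _ hrest)).congr fun z => ?_
  rw [sub_eq_iff_eq_add, ← Finset.sum_union Finset.disjoint_sdiff, Finset.union_sdiff_self_eq_union]
  refine Finset.sum_subset Finset.subset_union_right fun m _ hm => ?_
  rw [hds m hm, Pi.zero_apply, zero_mul]

theorem exists_simplePoleAt_of_isolated {f g G : ℂ → ℂ} {p a : ℂ} (hf : MeromorphicAt f p)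
    (hg : MeromorphicAt g p) (ha : a ≠ 0) (hG : Continuous G) (hGeven : G.Even) (hGa : G a ≠ 0)
    (hfg : ∀ Q : ℂ → ℂ, Differentiable ℂ Q → Q.Even → ∃ v,
      Tendsto (fun z => f z * (G (z - p + a) * Q (z - p + a)) +
        g z * (G (z - p - a) * Q (z - p - a))) (𝓝[≠] p) (𝓝 v)) :
    ∃ r, SimplePoleAt f p r ∧ SimplePoleAt g p (-r) := by
  have hlim : ∀ {h : ℂ → ℂ}, Continuous h → Tendsto h (𝓝[≠] p) (𝓝 (h p)) := fun hh =>
    (hh.tendsto p).mono_left nhdsWithin_le_nhds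
  have hdiv : ∀ {h q : ℂ → ℂ} {v : ℂ}, Continuous q → q p ≠ 0 →
      Tendsto (fun z => (z - p) * h z * q z) (𝓝[≠] p) (𝓝 v) →
      Tendsto (fun z => (z - p) * h z) (𝓝[≠] p) (𝓝 (v / q p)) := fun hq hqp hv => by
    refine (hv.div (hlim hq) hqp).congr' ?_
    filter_upwards [(hlim hq).eventually_ne hqp] with z hz
    exact mul_div_cancel_right₀ _ hz
  obtain ⟨v₁, hv₁⟩ := hfg (fun _ => 1) (by fun_prop) fun _ => rfl
  obtain ⟨v₂, hv₂⟩ := hfg (fun x => x ^ 2 - a ^ 2) (by fun_prop) fun x => by simp only [neg_sq]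
  -- `x² - a²` takes the values `u(u ± 2a)` at `u ± a`, so eliminating `g` leaves `4a·u·f·G(u + a)`.
  have hf' : Tendsto (fun z => (z - p) * f z * (4 * a * G (z - p + a))) (𝓝[≠] p) (𝓝 v₂) := by
    have hq : Continuous fun z => (z - p) * (z - p - 2 * a) := by fun_prop
    have := hv₂.sub (hv₁.mul (hlim hq))
    simp only [sub_self, zero_mul, mul_zero, sub_zero] at this
    exact this.congr fun z => by ring
  obtain ⟨r, hr⟩ : ∃ r, Tendsto (fun z => (z - p) * f z) (𝓝[≠] p) (𝓝 r) :=
    ⟨_, hdiv (by fun_prop) (by simp [ha, hGa]) hf'⟩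
  refine ⟨r, simplePoleAt_iff_tendsto.2 ⟨hf, hr⟩, simplePoleAt_iff_tendsto.2 ⟨hg, ?_⟩⟩
  have hg' : Tendsto (fun z => (z - p) * g z * G (z - p - a)) (𝓝[≠] p) (𝓝 (-r * G a)) := by
    have hu : Continuous fun z => z - p := by fun_prop
    have hGu : Continuous fun z => G (z - p + a) := by fun_prop
    have := ((hlim hu).mul hv₁).sub (hr.mul (hlim hGu))
    simp only [sub_self, zero_mul, zero_add, zero_sub, mul_one, ← neg_mul] at this
    exact this.congr fun z => by ring
  have hGp : G (p - p - a) = G a := by rw [sub_self, zero_sub, hGeven]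
  have := hdiv (by fun_prop) (hGp ▸ hGa) hg'
  rwa [hGp, mul_div_cancel_right₀ _ hGa] at this

theorem hasAntisymmResidues_of_regularAt_shiftSum (hη : η ≠ 0) (hd : ∀ j, Meromorphic (d j))
    (hds : ∀ j ∉ s, d j = 0)
    (hreg : ∀ F, IsEvenRegular η F → ∀ m : ℤ, RegularAt (shiftSum η s d F) (m * η)) :
    HasAntisymmResidues η d := by
  have hpair : ∀ j ℓ : ℤ, ∃ r, SimplePoleAt (d j) (-ℓ * η) r ∧
      SimplePoleAt (d (2 * ℓ - j)) (-ℓ * η) (-r) := fun j ℓ => by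
    obtain ⟨G, hG, hGeven, hGj, hiso⟩ := exists_even_isolating hη hd hds hreg j ℓ
    rcases eq_or_ne j ℓ with rfl | hjℓ
    · obtain ⟨v, hv⟩ := hiso (fun _ => 1) (by fun_prop) fun _ => rfl
      have hpt : -(j : ℂ) * η + j * η = (j - j) * η := by ring
      have hregj : RegularAt (d j) (-j * η) := by
        rw [← regularAt_mul_iff_of_ne_zero (g := fun z => G (z + j * η))
          ((by fun_prop : Differentiable ℂ fun z => G (z + j * η)).analyticAt _) (hpt ▸ hGj),
          regularAt_iff_exists_tendsto]
        refine ⟨(((by fun_prop : Differentiable ℂ fun z => G (z + j * η)).analyticAt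
          _).meromorphicAt).fun_mul (hd j _), v, hv.congr fun z => ?_⟩
        rw [two_mul, add_sub_cancel_right, Finset.pair_eq_singleton, Finset.sum_singleton]
        ring
      refine ⟨0, simplePoleAt_zero_iff_regularAt.2 hregj, ?_⟩
      rw [neg_zero, two_mul, add_sub_cancel_right]
      exact simplePoleAt_zero_iff_regularAt.2 hregj
    · refine exists_simplePoleAt_of_isolated (hd j _) (hd _ _)
        (mul_ne_zero (sub_ne_zero.2 (Int.cast_injective.ne hjℓ)) hη) hG.continuous hGeven hGj
        fun Q hQ hQeven => ?_
      obtain ⟨v, hv⟩ := hiso Q hQ hQeven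
      refine ⟨v, hv.congr fun z => ?_⟩
      rw [Finset.sum_pair (by omega)]
      push_cast
      ring_nf
  choose r hr hr' using hpair
  exact ⟨r, hr, fun j ℓ => neg_eq_iff_eq_neg.1 ((hr' j ℓ).residue_unique (hr _ ℓ))⟩

end EvenFunctions

theorem neg_mem_Icc_neg_iff {j k : ℤ} : -j ∈ Finset.Icc (-k) k ↔ j ∈ Finset.Icc (-k) k := by
  rw [Finset.mem_Icc, Finset.mem_Icc]
  omega

section Recenter

variable {η lam w : ℂ} {s : Finset ℤ} {c : ℤ → ℂ → ℂ} {g : ℂ → ℂ}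

/-- The translate of `g` to centre `w`, multiplied by `exp(λx/2η)`: this turns the functional
equation of `ℳ_t` into evenness. -/
def recenter (η lam w : ℂ) (g : ℂ → ℂ) : ℂ → ℂ :=
  fun x => exp (lam * x / (2 * η)) * g (x + w)

/-- The coefficients of a difference operator conjugated by `recenter`, extended by `0` outside the
index set `s`. -/
def recenterCoeff (lam w : ℂ) (s : Finset ℤ) (c : ℤ → ℂ → ℂ) (j : ℤ) : ℂ → ℂ :=
  if j ∈ s then fun x => exp (-(lam * j / 2)) * c j (x + w) else 0

theorem recenter_surjective : Function.Surjective (recenter η lam w) := fun F =>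
  ⟨fun z => exp (-(lam * (z - w) / (2 * η))) * F (z - w), funext fun x => by
    simp only [recenter, add_sub_cancel_right]
    rw [← mul_assoc, ← Complex.exp_add, add_neg_cancel, Complex.exp_zero, one_mul]⟩

theorem recenterCoeff_of_mem {j : ℤ} (hj : j ∈ s) :
    recenterCoeff lam w s c j = fun x => exp (-(lam * j / 2)) * c j (x + w) :=
  if_pos hj

theorem recenterCoeff_of_notMem {j : ℤ} (hj : j ∉ s) : recenterCoeff lam w s c j = 0 :=
  if_neg hj

theorem meromorphic_recenterCoeff (hc : ∀ j ∈ s, Meromorphic (c j)) (j : ℤ) :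
    Meromorphic (recenterCoeff lam w s c j) := by
  by_cases hj : j ∈ s
  · rw [recenterCoeff_of_mem hj]
    exact fun x => (MeromorphicAt.const _ x).fun_mul
      (meromorphicAt_fun_comp_add_const_iff_meromorphicAt.2 (hc j hj _))
  · rw [recenterCoeff_of_notMem hj]
    exact fun x => MeromorphicAt.const 0 x

theorem recenter_shiftSum (hη : η ≠ 0) :
    recenter η lam w (shiftSum η s c g) =
      shiftSum η s (recenterCoeff lam w s c) (recenter η lam w g) := by
  funext x
  simp only [recenter, shiftSum, Finset.mul_sum]
  refine Finset.sum_congr rfl fun j hj => ?_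
  have hexp : exp (lam * x / (2 * η)) =
      exp (-(lam * j / 2)) * exp (lam * (x + j * η) / (2 * η)) := by
    rw [← Complex.exp_add]
    congr 1
    field_simp
    ring
  rw [recenterCoeff_of_mem hj, hexp, add_right_comm]
  ring

theorem recenterCoeff_reflect_iff {j : ℤ} (hj : j ∈ s) (hnj : -j ∈ s) (z : ℂ) :
    recenterCoeff lam w s c j z = recenterCoeff lam w s c (-j) (-z) ↔
      c j (z + w) = exp lam ^ j * c (-j) (-z + w) := by
  have hexp : exp (-(lam * (-j : ℤ) / 2)) = exp (-(lam * j / 2)) * exp lam ^ j := by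
    rw [← Complex.exp_int_mul, ← Complex.exp_add]
    push_cast
    ring_nf
  rw [recenterCoeff_of_mem hj, recenterCoeff_of_mem hnj, hexp]
  beta_reduce
  rw [mul_assoc]
  exact mul_right_inj' (Complex.exp_ne_zero _)

theorem recenterCoeff_reflect (hs : ∀ j ∈ s, -j ∈ s)
    (hc : ∀ j ∈ s, ∀ z, c j (z + w) = exp lam ^ j * c (-j) (-z + w)) (j : ℤ) (z : ℂ) :
    recenterCoeff lam w s c j z = recenterCoeff lam w s c (-j) (-z) := by
  by_cases hj : j ∈ s
  · exact (recenterCoeff_reflect_iff hj (hs j hj) z).2 (hc j hj z)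
  · rw [recenterCoeff_of_notMem hj, recenterCoeff_of_notMem fun h => hj (neg_neg j ▸ hs _ h)]
    rfl

theorem hasAntisymmResidues_recenterCoeff {r : ℤ → ℤ → ℂ}
    (hpole : ∀ j ∈ s, ∀ ℓ : ℤ, SimplePoleAt (c j) (w - ℓ * η) (r j ℓ))
    (hout : ∀ j ∈ s, ∀ ℓ, 2 * ℓ - j ∉ s → r j ℓ = 0)
    (hanti : ∀ j ∈ s, ∀ ℓ, 2 * ℓ - j ∈ s → r j ℓ = -(exp lam ^ (j - ℓ)) * r (2 * ℓ - j) ℓ) :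
    HasAntisymmResidues η (recenterCoeff lam w s c) := by
  refine ⟨fun j ℓ => if j ∈ s then exp (-(lam * j / 2)) * r j ℓ else 0, fun j ℓ => ?_,
    fun j ℓ => ?_⟩ <;> beta_reduce
  · by_cases hj : j ∈ s
    · rw [recenterCoeff_of_mem hj, if_pos hj]
      refine (simplePoleAt_comp_add_const_iff.2 ?_).const_mul _
      rw [neg_mul, neg_add_eq_sub]
      exact hpole j hj ℓ
    · rw [recenterCoeff_of_notMem hj, if_neg hj]
      exact simplePoleAt_zero_iff_regularAt.2 (regularAt_of_differentiable (differentiable_const 0))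
  · have hinvol : 2 * ℓ - (2 * ℓ - j) = j := by ring
    by_cases hj : j ∈ s <;> by_cases hj' : 2 * ℓ - j ∈ s
    · have hexp : exp (-(lam * (2 * ℓ - j : ℤ) / 2)) =
          exp (-(lam * j / 2)) * exp lam ^ (j - ℓ) := by
        rw [← Complex.exp_int_mul, ← Complex.exp_add]
        push_cast
        ring_nf
      rw [if_pos hj, if_pos hj', hanti j hj ℓ hj', hexp]
      ring
    · rw [if_pos hj, if_neg hj', hout j hj ℓ hj', mul_zero, neg_zero]
    · rw [if_neg hj, if_pos hj', hout _ hj' ℓ (hinvol.symm ▸ hj), mul_zero, neg_zero]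
    · rw [if_neg hj, if_neg hj', neg_zero]

theorem HasAntisymmResidues.exists_of_recenterCoeff
    (h : HasAntisymmResidues η (recenterCoeff lam w s c)) :
    ∃ r : ℤ → ℤ → ℂ, (∀ j ∈ s, ∀ ℓ : ℤ, SimplePoleAt (c j) (w - ℓ * η) (r j ℓ)) ∧
      (∀ j, r j j = 0) ∧ (∀ j ℓ, 2 * ℓ - j ∉ s → r j ℓ = 0) ∧
      ∀ j ℓ, r j ℓ = -(exp lam ^ (j - ℓ)) * r (2 * ℓ - j) ℓ := by
  obtain ⟨ρ, hpole, hanti⟩ := h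
  have hout : ∀ j ∉ s, ∀ ℓ, ρ j ℓ = 0 := fun j hj ℓ => (hpole j ℓ).residue_unique <| by
    rw [recenterCoeff_of_notMem hj]
    exact simplePoleAt_zero_iff_regularAt.2 (regularAt_of_differentiable (differentiable_const 0))
  refine ⟨fun j ℓ => exp (lam * j / 2) * ρ j ℓ, fun j hj ℓ => ?_, fun j => ?_, fun j ℓ hj => ?_,
    fun j ℓ => ?_⟩ <;> beta_reduce
  · have := (hpole j ℓ).const_mul (exp (lam * j / 2))
    simp only [recenterCoeff_of_mem hj, ← mul_assoc, ← Complex.exp_add, add_neg_cancel,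
      Complex.exp_zero, one_mul] at this
    rwa [simplePoleAt_comp_add_const_iff, neg_mul, neg_add_eq_sub] at this
  · have := hanti j j
    rw [two_mul, add_sub_cancel_right, self_eq_neg] at this
    rw [this, mul_zero]
  · rw [hanti, hout _ hj, neg_zero, mul_zero]
  · have hexp : exp (lam * j / 2) =
        exp lam ^ (j - ℓ) * exp (lam * (2 * ℓ - j : ℤ) / 2) := by
      rw [← Complex.exp_int_mul, ← Complex.exp_add]
      push_cast
      ring_nf
    rw [hanti, hexp]
    ring

end Recenter

section HalfPeriods

variable {τ η ν μ : ℂ}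

theorem exp_lamh (hμ : μ = exp (8 * Real.pi * I * ν)) (t : Fin 4) : exp (lamh ν t) = εh μ t := by
  fin_cases t <;> simp [lamh, εh, hμ]

theorem memM_iff_isEvenRegular_recenter {t : Fin 4} {g : ℂ → ℂ} :
    memM τ η ν t g ↔ IsEvenRegular η (recenter η (lamh ν t) (ωh τ t) g) := by
  set e : ℂ → ℂ := fun x => exp (lamh ν t * x / (2 * η))
  have he : ∀ x, AnalyticAt ℂ e x := fun x => by fun_prop
  have he0 : ∀ x, e x ≠ 0 := fun x => Complex.exp_ne_zero _
  refine and_congr ?_ (and_congr (forall_congr' fun m => ?_) (forall_congr' fun z => ?_))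
  · have : ∀ x, MeromorphicAt (recenter η (lamh ν t) (ωh τ t) g) x ↔ MeromorphicAt g (x + ωh τ t) :=
      fun x => (meromorphicAt_mul_iff_of_ne_zero (he x) (he0 x)).trans
        meromorphicAt_fun_comp_add_const_iff_meromorphicAt
    rw [meromorphicOn_univ]
    exact ⟨fun h x => (this x).2 (h _), fun h x => by
      simpa only [sub_add_cancel] using (this (x - ωh τ t)).1 (h _)⟩
  · rw [add_comm]
    exact ((regularAt_mul_iff_of_ne_zero (he _) (he0 _)).trans regularAt_comp_add_const_iff).symm
  · have hexp : exp (lamh ν t * z / η) * e (-z) = e z := by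
      rw [← Complex.exp_add]
      congr 1
      ring
    change _ ↔ e (-z) * g (-z + ωh τ t) = e z * g (z + ωh τ t)
    rw [← mul_right_inj' (he0 (-z)), ← mul_assoc, mul_comm (e (-z)) (exp _), hexp, neg_add_eq_sub,
      add_comm z]

theorem forall_memM_shiftSum_iff (hη : η ≠ 0) {s : Finset ℤ} {c : ℤ → ℂ → ℂ} {t : Fin 4} :
    (∀ g, memM τ η ν t g → memM τ η ν t (shiftSum η s c g)) ↔
      ∀ F, IsEvenRegular η F →
        IsEvenRegular η (shiftSum η s (recenterCoeff (lamh ν t) (ωh τ t) s c) F) := by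
  simp only [memM_iff_isEvenRegular_recenter, recenter_shiftSum hη]
  exact (recenter_surjective.forall (p := fun F => IsEvenRegular η F →
    IsEvenRegular η (shiftSum η s (recenterCoeff (lamh ν t) (ωh τ t) s c) F))).symm

theorem conds_iff_forall_recenterCoeff (hμ : μ = exp (8 * Real.pi * I * ν)) {k : ℕ}
    {c : ℤ → ℂ → ℂ} :
    Conds τ μ η k c ↔ ∀ t : Fin 4,
      (∀ j ∈ Finset.Icc (-k : ℤ) k, ∀ z, c j (z + ωh τ t) = εh μ t ^ j * c (-j) (-z + ωh τ t)) ∧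
      HasAntisymmResidues η (recenterCoeff (lamh ν t) (ωh τ t) (Finset.Icc (-k : ℤ) k) c) := by
  simp only [Conds, ← exp_lamh hμ, ← not_le, abs_le, ← Finset.mem_Icc]
  constructor
  · rintro ⟨hsymm, r, hpole, -, hout, hanti⟩ t
    exact ⟨fun j hj => hsymm j hj t, hasAntisymmResidues_recenterCoeff (fun j hj => hpole j hj t)
      (fun j hj => hout j hj t) fun j hj => hanti j hj t⟩
  · intro h
    choose r hpole hdiag hout hanti using fun t => (h t).2.exists_of_recenterCoeff
    exact ⟨fun j hj t => (h t).1 j hj, fun j t => r t j, fun j hj t => hpole t j hj,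
      fun j _ t => hdiag t j, fun j _ t => hout t j, fun j _ t ℓ _ => hanti t j ℓ⟩

-- The centres form a parallelogram, so the point reflection at one of them is the product of the
-- reflections at the other three, whose arguments are generic when the original one is not.
theorem reflect_of_forall_generic_reflect {ω e : Fin 4 → ℂ} {f f' : ℂ → ℂ}
    (hωpar : ∀ t, ω t + ω (t + 2) = ω (t + 1) + ω (t + 3))
    (hepar : ∀ t, e t * e (t + 2) = e (t + 1) * e (t + 3)) (he : ∀ t, e t ≠ 0)
    (hω : ∀ s t, s ≠ t → ∀ n : ℤ, 2 * (ω s - ω t) ≠ n * η)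
    (hf : ∀ t z, (∀ n : ℤ, 2 * z ≠ n * η) → f (z + ω t) = e t * f' (-z + ω t)) (t : Fin 4)
    (z : ℂ) : f (z + ω t) = e t * f' (-z + ω t) := by
  by_cases hz : ∀ n : ℤ, 2 * z ≠ n * η
  · exact hf t z hz
  push Not at hz
  obtain ⟨n, hn⟩ := hz
  have hgeneric : ∀ a b, a ≠ b → ∀ m : ℤ, 2 * (z + (ω a - ω b)) ≠ m * η := fun a b hab m h =>
    hω a b hab (m - n) (by push_cast; linear_combination h - hn)
  have hpar := hωpar t
  have h₁ : f (z + ω t) = e (t + 1) * f' (-z - ω t + 2 * ω (t + 1)) := by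
    have := hf (t + 1) _ (hgeneric t (t + 1) (by simp))
    ring_nf at this ⊢
    exact this
  have h₂ : f (z + ω t + 2 * (ω (t + 2) - ω (t + 1))) =
      e (t + 2) * f' (-z - ω t + 2 * ω (t + 1)) := by
    have := hf (t + 2) _ (hgeneric (t + 3) (t + 1) (by simp))
    rw [show z + (ω (t + 3) - ω (t + 1)) + ω (t + 2) = z + ω t + 2 * (ω (t + 2) - ω (t + 1)) by
        linear_combination -hpar,
      show -(z + (ω (t + 3) - ω (t + 1))) + ω (t + 2) = -z - ω t + 2 * ω (t + 1) by
        linear_combination hpar] at this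
    exact this
  have h₃ : f (z + ω t + 2 * (ω (t + 2) - ω (t + 1))) = e (t + 3) * f' (-z + ω t) := by
    have := hf (t + 3) _ (hgeneric (t + 3) t (by simp))
    rw [show z + (ω (t + 3) - ω t) + ω (t + 3) = z + ω t + 2 * (ω (t + 2) - ω (t + 1)) by
        linear_combination -2 * hpar,
      show -(z + (ω (t + 3) - ω t)) + ω (t + 3) = -z + ω t by ring] at this
    exact this
  refine mul_left_cancel₀ (he (t + 2)) ?_
  calc e (t + 2) * f (z + ω t)
      = e (t + 1) * (e (t + 2) * f' (-z - ω t + 2 * ω (t + 1))) := by rw [h₁]; ring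
    _ = e (t + 1) * e (t + 3) * f' (-z + ω t) := by rw [← h₂, h₃, mul_assoc]
    _ = e (t + 2) * (e t * f' (-z + ω t)) := by rw [← hepar]; ring

theorem ωh_add_ωh_add_two (t : Fin 4) :
    ωh τ t + ωh τ (t + 2) = ωh τ (t + 1) + ωh τ (t + 3) := by
  fin_cases t <;> simp [ωh] <;> ring

theorem εh_mul_εh_add_two (t : Fin 4) : εh μ t * εh μ (t + 2) = εh μ (t + 1) * εh μ (t + 3) := by
  fin_cases t <;> simp [εh]

theorem int_add_mul_int_ne_zero (hτ : 0 < τ.im) {a b : ℤ} (hab : a ≠ 0 ∨ b ≠ 0) :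
    (a : ℂ) + τ * b ≠ 0 := fun h => by
  have hb : b = 0 := by simpa [hτ.ne'] using congrArg im h
  have ha : a = 0 := by simpa [hb] using h
  exact hab.elim (· ha) (· hb)

theorem two_mul_ωh_sub_ne (hτ : 0 < τ.im)
    (hgen : ∀ n : ℕ, 0 < n → ¬ ∃ m l : ℤ, (n : ℂ) * η = (m : ℂ) + τ * l) {s t : Fin 4}
    (hst : s ≠ t) (n : ℤ) : 2 * (ωh τ s - ωh τ t) ≠ n * η := by
  set a : Fin 4 → ℤ := ![0, 1, 1, 0] with ha
  set b : Fin 4 → ℤ := ![0, 0, 1, 1] with hb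
  have hab : ∀ i, 2 * ωh τ i = a i + τ * b i := fun i => by
    fin_cases i <;> simp [ωh, ha, hb] <;> ring
  have hne : a s - a t ≠ 0 ∨ b s - b t ≠ 0 := by
    revert s t
    decide
  intro h
  rw [mul_sub, hab, hab] at h
  rcases eq_or_ne n 0 with rfl | hn
  · refine int_add_mul_int_ne_zero hτ hne ?_
    push_cast at h ⊢
    linear_combination h
  · refine hgen n.natAbs (Int.natAbs_pos.2 hn) ⟨n.sign * (a s - a t), n.sign * (b s - b t), ?_⟩
    rw [← Int.cast_natCast, ← Int.sign_mul_self_eq_natAbs]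
    push_cast
    linear_combination -n.sign * h

theorem reflect_of_forall_memM_shiftSum (hη : η ≠ 0)
    (hω : ∀ s t : Fin 4, s ≠ t → ∀ n : ℤ, 2 * (ωh τ s - ωh τ t) ≠ n * η)
    (hμ : μ = exp (8 * Real.pi * I * ν)) {k : ℕ} {c : ℤ → ℂ → ℂ}
    (hA : ∀ t g, memM τ η ν t g → memM τ η ν t (shiftSum η (Finset.Icc (-k : ℤ) k) c g)) {j : ℤ}
    (hj : j ∈ Finset.Icc (-k : ℤ) k) (t : Fin 4) (z : ℂ) :
    c j (z + ωh τ t) = εh μ t ^ j * c (-j) (-z + ωh τ t) := by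
  refine reflect_of_forall_generic_reflect (e := fun t => εh μ t ^ j) ωh_add_ωh_add_two
    (fun t => ?_) (fun t => ?_) hω (fun t z hz => ?_) t z
  · rw [← mul_zpow, ← mul_zpow, εh_mul_εh_add_two]
  · rw [← exp_lamh hμ]
    exact zpow_ne_zero _ (Complex.exp_ne_zero _)
  · rw [← exp_lamh hμ, ← recenterCoeff_reflect_iff hj (neg_mem_Icc_neg_iff.2 hj)]
    exact reflect_of_even_shiftSum hη (fun _ => recenterCoeff_of_notMem)
      (fun F hF => ((forall_memM_shiftSum_iff hη).1 (hA t) F hF).2.2) hz j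

end HalfPeriods

theorem statement2_general {τ η ν μ : ℂ} (hη : η ≠ 0)
    (hω : ∀ s t : Fin 4, s ≠ t → ∀ n : ℤ, 2 * (ωh τ s - ωh τ t) ≠ n * η)
    (hμ : μ = exp (8 * Real.pi * I * ν)) (k : ℕ) (c : ℤ → ℂ → ℂ)
    (hc : ∀ j : ℤ, |j| ≤ (k : ℤ) → MeromorphicOn (c j) Set.univ) :
    (∀ t : Fin 4, ∀ g : ℂ → ℂ, memM τ η ν t g →
      memM τ η ν t (fun z => ∑ j ∈ Finset.Icc (-(k : ℤ)) (k : ℤ), c j z * g (z + (j : ℂ) * η)))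
    ↔ Conds τ μ η k c := by
  have hmer := fun t => meromorphic_recenterCoeff (lam := lamh ν t) (w := ωh τ t)
    fun j (hj : j ∈ Finset.Icc (-k : ℤ) k) =>
      meromorphicOn_univ.1 (hc j (abs_le.2 (Finset.mem_Icc.1 hj)))
  rw [conds_iff_forall_recenterCoeff hμ]
  constructor
  · refine fun hA t => ⟨fun j hj => reflect_of_forall_memM_shiftSum hη hω hμ hA hj t, ?_⟩
    exact hasAntisymmResidues_of_regularAt_shiftSum hη (hmer t) (fun _ => recenterCoeff_of_notMem)
      fun F hF => ((forall_memM_shiftSum_iff hη).1 (hA t) F hF).2.1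
  · refine fun hC t => (forall_memM_shiftSum_iff hη).2 fun F hF => isEvenRegular_shiftSum (hmer t)
      (fun _ => recenterCoeff_of_notMem) (recenterCoeff_reflect (fun j => neg_mem_Icc_neg_iff.2) ?_)
      (hC t).2 hF
    simpa only [exp_lamh hμ] using (hC t).1

/-- the difference operator `A = ∑_{j=-k}^k c_j(z) exp(jη∂_z)` maps every
space `ℳ_t` into itself if and only if the coefficients satisfy conditions (i)–(iii). -/
theorem statement2 (τ : ℂ) (hτ : 0 < τ.im) (η : ℂ) (hη : η ≠ 0)
    (hgen : ∀ n : ℕ, 0 < n → ¬ ∃ m l : ℤ, (n : ℂ) * η = (m : ℂ) + τ * l)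
    (ν : ℂ) (μ : ℂ) (hμ : μ = Complex.exp (8 * Real.pi * I * ν))
    (k : ℕ) (hk : 1 ≤ k) (c : ℤ → ℂ → ℂ)
    (hc : ∀ j : ℤ, |j| ≤ (k : ℤ) → MeromorphicOn (c j) Set.univ) :
    (∀ t : Fin 4, ∀ g : ℂ → ℂ, memM τ η ν t g →
      memM τ η ν t (fun z => ∑ j ∈ Finset.Icc (-(k : ℤ)) (k : ℤ), c j z * g (z + (j : ℂ) * η)))
    ↔ Conds τ μ η k c :=
  statement2_general hη (fun _ _ => two_mul_ωh_sub_ne hτ hgen) hμ k c hc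
end
end
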